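/- arXiv:1004.3510 — 2 statements merged into one kernel-verified Lean document; each statement's English description precedes it below -/
import Mathlib

section
/- Let 𝓕_1, …, 𝓕_m be Lalley–Gatzouras schemes and let ω ∈ {1,…,m}^ℕ have positive limit frequencies P = (P_1,…,P_m). Then there exist constants K > 0 and δ_0 > 0, depending only on the schemes and on a positive lower bound for the P_k, such that for every positive rational probability vector Q with δ = max_k |P_k − Q_k| ≤ δ_0 and every periodic sequence ω(Q) with limit frequencies Q, writing 𝓛(Q) = dim_H Λ_{ω(Q)}, one has 𝓛(Q)(1 − Kδ) ≤ dim_H Λ_ω ≤ 𝓛(Q)(1 + Kδ). -/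
/-!
All limit sets `Λ_ω` are coded by one and the same space: a code `y` prescribes, for every scheme `k`
and every `i`, the symbol to be used at the appearance number `i` of `k` in the sequence. If `ω` and
`ω'` have limit frequencies that are `δ`-close, then all but a proportion `O(δ)` of the first `n`
terms of `ω'` are matched with appearances among the first `n` terms of `ω`
(`exists_matching`). Hence two codes in the same approximate square of size `r` for `ω` agree on a
rectangle for `ω'` of size at most `C * r ^ (1 - O(δ))`, the contraction ratios being bounded away
from `0` and `1`.

A set of diameter `r` meets a bounded number of approximate squares of
size `r`. Without any separation assumption this is seen by labelling an approximate square with the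
cell of a grid of mesh `κ * r` that contains its lower left corner: squares with disjoint interiors
have distinct labels (`Adm.agree`), and close points have close labels (`Adm.floor_close`). So
the correspondence between the two limit sets behaves like a Hölder map of exponent `1 - O(δ)`, and
`dimH_range_mul_le` turns this into `dimH Λ_ω' * (1 - K * δ) ≤ dimH Λ_ω`
(`dimH_limitSet_le`). Exchanging the roles of the two sequences gives both inequalities.
-/

open Filter Metric Finset

/-- A **Lalley–Gatzouras scheme** on `[0,1]²`: a finite family of affine maps
`f (i,j) (x,y) = (a i j * x + c i j, b i * y + d i)` indexed by an alphabet
`{(i,j) : i < m₁, j < m₂ i}`, where the contraction in the horizontal direction is at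
least as strong as in the vertical one (`a i j ≤ b i`), and consecutive images of the unit
square are stacked inside `[0,1]²` in increasing order without overlapping. -/
structure LGScheme where
  m₁ : ℕ
  hm₁ : 0 < m₁
  m₂ : Fin m₁ → ℕ
  hm₂ : ∀ i, 0 < m₂ i
  a : (i : Fin m₁) → Fin (m₂ i) → ℝ
  b : Fin m₁ → ℝ
  c : (i : Fin m₁) → Fin (m₂ i) → ℝ
  d : Fin m₁ → ℝ
  ha_pos : ∀ i j, 0 < a i j
  hab : ∀ i j, a i j ≤ b i
  hb_lt_one : ∀ i, b i < 1
  hc_first : ∀ i, 0 ≤ c i ⟨0, hm₂ i⟩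
  hc_step : ∀ (i : Fin m₁) (j : Fin (m₂ i)) (h : (j : ℕ) + 1 < m₂ i),
    a i j + c i j ≤ c i ⟨(j : ℕ) + 1, h⟩
  hc_last : ∀ i, c i ⟨m₂ i - 1, Nat.sub_lt (hm₂ i) Nat.one_pos⟩ ≤
    1 - a i ⟨m₂ i - 1, Nat.sub_lt (hm₂ i) Nat.one_pos⟩
  hd_first : 0 ≤ d ⟨0, hm₁⟩
  hd_step : ∀ (i : Fin m₁) (h : (i : ℕ) + 1 < m₁), b i + d i ≤ d ⟨(i : ℕ) + 1, h⟩
  hd_last : d ⟨m₁ - 1, Nat.sub_lt hm₁ Nat.one_pos⟩ ≤ 1 - b ⟨m₁ - 1, Nat.sub_lt hm₁ Nat.one_pos⟩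

namespace LGScheme

/-- The alphabet (set of symbols `(i,j)`) of a Lalley–Gatzouras scheme. -/
def Sym (S : LGScheme) : Type := (i : Fin S.m₁) × Fin (S.m₂ i)

/-- The affine map `f (i,j) (x,y) = (a i j * x + c i j, b i * y + d i)` of the scheme
associated to the symbol `s = (i,j)`. -/
def toMap (S : LGScheme) (s : S.Sym) : ℝ × ℝ → ℝ × ℝ :=
  fun p => (S.a s.1 s.2 * p.1 + S.c s.1 s.2, S.b s.1 * p.2 + S.d s.1)

/-- The Hutchinson operator of the scheme: `A ↦ ⋃_{(i,j)} f (i,j) '' A`. -/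
def hutch (S : LGScheme) (A : Set (ℝ × ℝ)) : Set (ℝ × ℝ) :=
  ⋃ s : S.Sym, S.toMap s '' A

/-- The **separation condition**: the strict inequalities
`c i (j+1) > a i j + c i j` and `d (i+1) > b i + d i`. -/
def Separation (S : LGScheme) : Prop :=
  (∀ (i : Fin S.m₁) (j : Fin (S.m₂ i)) (h : (j : ℕ) + 1 < S.m₂ i),
    S.a i j + S.c i j < S.c i ⟨(j : ℕ) + 1, h⟩) ∧
  ∀ (i : Fin S.m₁) (h : (i : ℕ) + 1 < S.m₁), S.b i + S.d i < S.d ⟨(i : ℕ) + 1, h⟩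

end LGScheme

/-- The symbolic space `A_ω = A (ω 0) × A (ω 1) × ⋯` associated to a family of schemes
`S` and a sequence `ω` of indices of schemes. -/
def SymSpace {m : ℕ} (S : Fin m → LGScheme) (ω : ℕ → Fin m) : Type :=
  (n : ℕ) → (S (ω n)).Sym

namespace SymSpace

variable {m : ℕ} {S : Fin m → LGScheme} {ω : ℕ → Fin m}

/-- The **rectangle** `R_{n₁,n₂} x` in the symbolic space: the set of sequences agreeing
with `x` in the first `n₂` symbols `i` and the first `n₁` full symbols `(i,j)`. -/
def rect (x : SymSpace S ω) (n₁ n₂ : ℕ) : Set (SymSpace S ω) :=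
  {y | (∀ k < n₂, (y k).1 = (x k).1) ∧ ∀ k < n₁, y k = x k}

/-- The **width** `∏_{k<n₁} a (ω k) (x k)` of the rectangle `R_{n₁,n₂} x`. -/
def width (x : SymSpace S ω) (n₁ : ℕ) : ℝ :=
  ∏ k ∈ Finset.range n₁, (S (ω k)).a (x k).1 (x k).2

/-- The **height** `∏_{k<n₂} b (ω k) (x k)` of the rectangle `R_{n₁,n₂} x`. -/
def height (x : SymSpace S ω) (n₂ : ℕ) : ℝ :=
  ∏ k ∈ Finset.range n₂, (S (ω k)).b (x k).1

/-- `R_{n₁,n₂} x` is an **approximate square** (with comparability constant `C`) if its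
width and height agree up to the multiplicative constant `C`. -/
def IsApproxSquare (C : ℝ) (x : SymSpace S ω) (n₁ n₂ : ℕ) : Prop :=
  n₁ ≤ n₂ ∧ height x n₂ ≤ C * width x n₁ ∧ width x n₁ ≤ C * height x n₂

end SymSpace

/-- `IsLimitSet S ω Λ` : `Λ` is the limit set of the sequence of iterated function schemes
`S (ω 0), S (ω 1), …`, i.e. `Λ` is a nonempty compact set such that for every nonempty
compact `A`, the sets `F (ω 0) ∘ ⋯ ∘ F (ω (n-1)) (A)` converge to `Λ` in the Hausdorff
metric (`F k` denoting the Hutchinson operator of the scheme `S k`). -/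
def IsLimitSet {m : ℕ} (S : Fin m → LGScheme) (ω : ℕ → Fin m) (Λ : Set (ℝ × ℝ)) : Prop :=
  Λ.Nonempty ∧ IsCompact Λ ∧ ∀ A : Set (ℝ × ℝ), A.Nonempty → IsCompact A →
    Tendsto
      (fun n => hausdorffDist ((List.range n).foldr (fun k B => (S (ω k)).hutch B) A) Λ)
      atTop (nhds 0)

/-- The symbol `k` has limit frequency `P` in the sequence `ω` if
`(1/n) #{l < n : ω l = k} → P` as `n → ∞`. -/
def HasLimitFreq {m : ℕ} (ω : ℕ → Fin m) (k : Fin m) (P : ℝ) : Prop :=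
  Tendsto (fun n : ℕ => (((Finset.range n).filter fun l => ω l = k).card : ℝ) / n)
    atTop (nhds P)

/-- A sequence `ω` is periodic if it has a period `T ≥ 1`. -/
def IsPeriodic {m : ℕ} (ω : ℕ → Fin m) : Prop :=
  ∃ T : ℕ, 0 < T ∧ ∀ l, ω (l + T) = ω l

/-- `NthAppear ω k n l` : the (0-indexed) position `l` is the place of the `n`-th
appearance (`n ≥ 1`) of the symbol `k` in the sequence `ω`. -/
def NthAppear {m : ℕ} (ω : ℕ → Fin m) (k : Fin m) (n l : ℕ) : Prop :=
  ω l = k ∧ ((Finset.range (l + 1)).filter fun t => ω t = k).card = n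

/-! ### Covers and Hausdorff dimension -/

open MeasureTheory in
/-- Fine covers of a set of zero `s`-dimensional Hausdorff measure. The scales `r i` are kept
strictly positive even when a covering set is a point, so that they can be used as scales for
approximate squares. -/
lemma exists_fine_cover {A : Set (ℝ × ℝ)} {s : ℝ} (hs : 0 < s)
    (hA : Measure.hausdorffMeasure s A = 0) {ε : ℝ} (hε : 0 < ε) :
    ∃ (U : ℕ → Set (ℝ × ℝ)) (r : ℕ → ℝ), A ⊆ ⋃ i, U i ∧ (∀ i, 0 < r i) ∧ (∀ i, r i ≤ ε) ∧
      (∀ i, Metric.ediam (U i) ≤ ENNReal.ofReal (r i)) ∧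
      ∑' i, ENNReal.ofReal (r i) ^ s ≤ ENNReal.ofReal ε := by
  have hε2 : ENNReal.ofReal (ε / 2) ≠ 0 := by
    simpa using hε
  obtain ⟨e, he0, he⟩ := ENNReal.exists_pos_sum_of_countable hε2 ℕ
  rw [Measure.hausdorffMeasure_apply] at hA
  simp only [ENNReal.iSup_eq_zero] at hA
  have h1 := hA (ENNReal.ofReal ε) (by simpa using hε)
  have h2 : (0 : ENNReal) < ENNReal.ofReal (ε / 2) := pos_iff_ne_zero.2 hε2
  rw [← h1] at h2
  simp only [iInf_lt_iff] at h2
  obtain ⟨U, hU, hd, hsum⟩ := h2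
  have hdt : ∀ i, Metric.ediam (U i) ≠ ⊤ := fun i =>
    ne_top_of_le_ne_top ENNReal.ofReal_ne_top (hd i)
  refine ⟨U, fun i => max (Metric.ediam (U i)).toReal (min ((e i : ℝ) ^ (1 / s)) ε), hU,
    fun i => ?_, fun i => ?_, fun i => ?_, ?_⟩
  · have := he0 i
    exact lt_max_of_lt_right (lt_min (Real.rpow_pos_of_pos (by exact_mod_cast this) _) hε)
  · exact max_le (ENNReal.toReal_le_of_le_ofReal hε.le (hd i)) (min_le_right _ _)
  · conv_lhs => rw [← ENNReal.ofReal_toReal (hdt i)]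
    exact ENNReal.ofReal_le_ofReal (le_max_left _ _)
  · calc _ ≤ ∑' i, ((⨆ _ : (U i).Nonempty, Metric.ediam (U i) ^ s) + (e i : ENNReal)) := by
          refine ENNReal.tsum_le_tsum fun i => ?_
          beta_reduce
          rcases max_choice (Metric.ediam (U i)).toReal (min ((e i : ℝ) ^ (1 / s)) ε) with h | h
          · rw [h, ENNReal.ofReal_toReal (hdt i)]
            refine le_add_right ?_
            rcases (U i).eq_empty_or_nonempty with h' | h'
            · simp [h', hs]
            · simp [h']
          · rw [h]
            refine le_add_left ?_
            calc _ ≤ ENNReal.ofReal ((e i : ℝ) ^ (1 / s)) ^ s := by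
                  gcongr; exact min_le_left _ _
              _ = e i := by
                  rw [ENNReal.ofReal_rpow_of_nonneg (by positivity) hs.le,
                    ← Real.rpow_mul (by positivity), one_div_mul_cancel hs.ne', Real.rpow_one,
                    ENNReal.ofReal_coe_nnreal]
      _ ≤ ENNReal.ofReal (ε / 2) + ENNReal.ofReal (ε / 2) := by
          rw [ENNReal.tsum_add]
          exact add_le_add hsum.le he.le
      _ = ENNReal.ofReal ε := by
          rw [← ENNReal.ofReal_add (by positivity) (by positivity), add_halves]

open MeasureTheory in
/-- A dimension comparison for two images of the same set `Y`. At each scale `r`, `Y` is cut into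
pieces labelled by `ℤ × ℤ`. If a set of diameter `r` in the first image only meets boundedly many
pieces, and each piece has diameter `O(r ^ α)` in the second image, then the dimensions compare as
if the second image were an `α`-Hölder image of the first one. -/
lemma dimH_range_mul_le {Y : Type*} (f g : Y → ℝ × ℝ) {α C : ℝ} (hα : 0 < α) (hC : 0 ≤ C) (M : ℕ)
    (h : ∀ r : ℝ, 0 < r → r ≤ 1 → ∃ l : Y → ℤ × ℤ,
      (∀ x y, dist (f x) (f y) ≤ r → |(l x).1 - (l y).1| ≤ M ∧ |(l x).2 - (l y).2| ≤ M) ∧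
      ∀ x y, l x = l y → dist (g x) (g y) ≤ C * r ^ α) :
    dimH (Set.range g) * ENNReal.ofReal α ≤ dimH (Set.range f) := by
  refine le_of_forall_gt_imp_ge_of_dense fun s' hs' => ?_
  rcases eq_or_ne s' ⊤ with rfl | hst
  · exact le_top
  lift s' to NNReal using hst
  have hs0 : (0 : ℝ) < s' := by
    have : (0 : ENNReal) < s' := lt_of_le_of_lt (by simp) hs'
    exact_mod_cast this
  have hA := hausdorffMeasure_of_dimH_lt hs'
  set s : ℝ := NNReal.toReal s' with hsdef
  rw [← ENNReal.le_div_iff_mul_le (Or.inl (by simpa using hα)) (Or.inl ENNReal.ofReal_ne_top)]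
  have hdd : (s' : ENNReal) / ENNReal.ofReal α = ((s' / α.toNNReal : NNReal) : ENNReal) := by
    rw [ENNReal.coe_div (by simpa using hα)]; rfl
  rw [hdd]
  apply dimH_le_of_hausdorffMeasure_ne_top
  have hd : ((s' / α.toNNReal : NNReal) : ℝ) = s / α := by
    rw [NNReal.coe_div, Real.coe_toNNReal α hα.le]
  rw [hd]
  set J := ((Finset.Icc (-(M : ℤ)) M) ×ˢ (Finset.Icc (-(M : ℤ)) M) : Finset (ℤ × ℤ))
  -- the pieces of the cover at scale `ε` give a cover of the second image with small cost
  have step : ∀ n : ℕ, ∃ t : ℕ × J → Set (ℝ × ℝ),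
      (∀ i, Metric.ediam (t i) ≤ ENNReal.ofReal (C * (1 / ((n : ℝ) + 1)) ^ α)) ∧
      Set.range g ⊆ ⋃ i, t i ∧
      ∑' i, Metric.ediam (t i) ^ (s / α) ≤
        (J.card : ENNReal) * (ENNReal.ofReal (C ^ (s / α)) *
          ENNReal.ofReal (1 / ((n : ℝ) + 1))) := by
    intro n
    have hε : (0 : ℝ) < 1 / ((n : ℝ) + 1) := by positivity
    have hε1 : (1 : ℝ) / ((n : ℝ) + 1) ≤ 1 := by
      rw [div_le_one (by positivity)]; linarith [(Nat.cast_nonneg n : (0 : ℝ) ≤ n)]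
    obtain ⟨U, r, hU, hr0, hrε, hUr, hsum⟩ := exists_fine_cover hs0 hA hε
    choose l hl1 hl2 using fun i => h (r i) (hr0 i) ((hrε i).trans hε1)
    rcases isEmpty_or_nonempty Y with hY | ⟨⟨y0⟩⟩
    · refine ⟨fun _ => ∅, by simp, ?_, ?_⟩
      · rw [Set.range_eq_empty]; simp
      · have : 0 < s / α := by positivity
        simp [this]
    have : ∀ i, ∃ b : Y, ∀ y, f y ∈ U i → f b ∈ U i := fun i => by
      by_cases hb : ∃ y, f y ∈ U i
      · exact ⟨hb.choose, fun _ _ => hb.choose_spec⟩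
      · exact ⟨y0, fun y hy => (hb ⟨y, hy⟩).elim⟩
    choose b hb using this
    have hdiam : ∀ i : ℕ × J, Metric.ediam
        (g '' {x | f x ∈ U i.1 ∧ l i.1 x = l i.1 (b i.1) + (i.2 : ℤ × ℤ)}) ≤
        ENNReal.ofReal (C * r i.1 ^ α) := by
      rintro ⟨i, j⟩
      refine Metric.ediam_le ?_
      rintro _ ⟨x, hx, rfl⟩ _ ⟨y, hy, rfl⟩
      rw [edist_dist]
      exact ENNReal.ofReal_le_ofReal (hl2 i x y (hx.2.trans hy.2.symm))
    refine ⟨fun i => g '' {x | f x ∈ U i.1 ∧ l i.1 x = l i.1 (b i.1) + (i.2 : ℤ × ℤ)},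
      fun i => ?_, ?_, ?_⟩
    · refine (hdiam i).trans (ENNReal.ofReal_le_ofReal ?_)
      have := (hr0 i.1).le
      have := hrε i.1
      gcongr
    · rintro _ ⟨x, rfl⟩
      obtain ⟨i, hi⟩ := Set.mem_iUnion.1 (hU ⟨x, rfl⟩)
      have hdist : dist (f x) (f (b i)) ≤ r i := by
        have := (Metric.edist_le_ediam_of_mem hi (hb i x hi)).trans (hUr i)
        rw [edist_dist] at this
        exact (ENNReal.ofReal_le_ofReal_iff (hr0 i).le).1 this
      have h1 := hl1 i x (b i) hdist
      refine Set.mem_iUnion.2 ⟨⟨i, ⟨l i x - l i (b i), ?_⟩⟩, x, ⟨hi, by simp⟩, rfl⟩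
      rw [abs_le, abs_le] at h1
      simp only [J, Finset.mem_product, Finset.mem_Icc, Prod.fst_sub, Prod.snd_sub]
      exact h1
    · calc _ ≤ ∑' i : ℕ × J, ENNReal.ofReal (C ^ (s / α)) * ENNReal.ofReal (r i.1) ^ s := by
            refine ENNReal.tsum_le_tsum fun i => ?_
            have hri := hr0 i.1
            calc _ ≤ ENNReal.ofReal (C * r i.1 ^ α) ^ (s / α) :=
                  ENNReal.rpow_le_rpow (hdiam i) (by positivity)
              _ = _ := by
                  rw [ENNReal.ofReal_rpow_of_nonneg (by positivity) (by positivity),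
                    ENNReal.ofReal_rpow_of_nonneg (by positivity) (by positivity),
                    ← ENNReal.ofReal_mul (by positivity), Real.mul_rpow hC (by positivity),
                    ← Real.rpow_mul hri.le, mul_div_cancel₀ _ hα.ne']
        _ = (J.card : ENNReal) * (ENNReal.ofReal (C ^ (s / α)) *
              ∑' i, ENNReal.ofReal (r i) ^ s) := by
            rw [ENNReal.tsum_prod (f := fun i (_ : J) =>
              ENNReal.ofReal (C ^ (s / α)) * ENNReal.ofReal (r i) ^ s)]
            simp only [tsum_fintype, Finset.sum_const, Finset.card_univ, Fintype.card_coe,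
              nsmul_eq_mul, ENNReal.tsum_mul_left]
        _ ≤ _ := by gcongr
  choose t ht1 ht2 ht3 using step
  have hlim : Tendsto (fun n : ℕ => 1 / ((n : ℝ) + 1)) atTop (nhds 0) :=
    tendsto_one_div_add_atTop_nhds_zero_nat
  have hlim1 : Tendsto (fun n : ℕ => ENNReal.ofReal (C * (1 / ((n : ℝ) + 1)) ^ α))
      atTop (nhds 0) := by
    have h1 := (hlim.rpow_const (Or.inr hα.le)).const_mul C
    have h2 := ENNReal.tendsto_ofReal h1
    simpa [Real.zero_rpow hα.ne'] using h2
  have hlim2 : Tendsto (fun n : ℕ => (J.card : ENNReal) * (ENNReal.ofReal (C ^ (s / α)) *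
      ENNReal.ofReal (1 / ((n : ℝ) + 1)))) atTop (nhds 0) := by
    have h1 := ENNReal.Tendsto.const_mul (a := ENNReal.ofReal (C ^ (s / α)))
      (ENNReal.tendsto_ofReal hlim) (Or.inr ENNReal.ofReal_ne_top)
    have h2 := ENNReal.Tendsto.const_mul (a := (J.card : ENNReal)) h1
      (Or.inr (ENNReal.natCast_ne_top _))
    simpa using h2
  have hfin := Measure.hausdorffMeasure_le_liminf_tsum (s / α) (Set.range g) _ hlim1 t
    (Eventually.of_forall ht1) (Eventually.of_forall ht2)
  have hle := Filter.liminf_le_liminf (f := atTop) (Eventually.of_forall ht3)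
  rw [hlim2.liminf_eq] at hle
  exact ne_top_of_le_ne_top ENNReal.zero_ne_top (hfin.trans hle)

/-! ### Nested intervals on the line -/

/-- The length of the interval of level `n` obtained by composing contractions of ratios `u l`. -/
def wid (u : ℕ → ℝ) (n : ℕ) : ℝ := ∏ l ∈ Finset.range n, u l

/-- The left endpoint of the interval of level `n` obtained by composing, in this order, the maps
`x ↦ u l * x + v l` for `l < n` and applying the result to `[0,1]`. -/
def lft (u v : ℕ → ℝ) (n : ℕ) : ℝ := ∑ l ∈ Finset.range n, wid u l * v l

/-- The point of the line coded by the maps `x ↦ u l * x + v l`. -/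
noncomputable def pt (u v : ℕ → ℝ) : ℝ := ∑' l, wid u l * v l

/-- The maps `x ↦ u l * x + v l` send `[0,1]` into itself, with ratios bounded away from `0`
and `1` by `κ`. -/
structure Adm (κ : ℝ) (u v : ℕ → ℝ) : Prop where
  lo : ∀ l, κ ≤ u l
  hi : ∀ l, u l ≤ 1 - κ
  v0 : ∀ l, 0 ≤ v l
  uv : ∀ l, u l + v l ≤ 1

/-- `n` is the first level at which the length of the interval is at most `r`. -/
def IsFirstLevel (u : ℕ → ℝ) (r : ℝ) (n : ℕ) : Prop := wid u n ≤ r ∧ ∀ k < n, r < wid u k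

lemma wid_succ (u : ℕ → ℝ) (n : ℕ) : wid u (n + 1) = wid u n * u n := Finset.prod_range_succ _ _

lemma lft_succ (u v : ℕ → ℝ) (n : ℕ) : lft u v (n + 1) = lft u v n + wid u n * v n :=
  Finset.sum_range_succ _ _

lemma wid_congr {u u' : ℕ → ℝ} {n : ℕ} (h : ∀ l < n, u l = u' l) : wid u n = wid u' n :=
  Finset.prod_congr rfl fun l hl => h l (Finset.mem_range.1 hl)

lemma lft_congr {u u' v v' : ℕ → ℝ} {n : ℕ} (h : ∀ l < n, u l = u' l ∧ v l = v' l) :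
    lft u v n = lft u' v' n :=
  Finset.sum_congr rfl fun l hl => by
    have hl := Finset.mem_range.1 hl
    rw [(h l hl).2, wid_congr fun k hk => (h k (hk.trans hl)).1]

section
variable {κ : ℝ} {u v : ℕ → ℝ}

lemma Adm.wid_pos (h : Adm κ u v) (hκ : 0 < κ) (n : ℕ) : 0 < wid u n :=
  Finset.prod_pos fun l _ => hκ.trans_le (h.lo l)

lemma Adm.kappa_lt (h : Adm κ u v) (hκ : 0 < κ) : κ < 1 := by
  linarith [h.lo 0, h.hi 0]

lemma Adm.wid_le (h : Adm κ u v) (hκ : 0 < κ) (n : ℕ) : wid u n ≤ (1 - κ) ^ n := by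
  calc wid u n ≤ ∏ _l ∈ Finset.range n, (1 - κ) :=
        Finset.prod_le_prod (fun l _ => (hκ.trans_le (h.lo l)).le) fun l _ => h.hi l
    _ = _ := by simp

lemma Adm.lft_mono (h : Adm κ u v) (hκ : 0 < κ) : Monotone (lft u v) :=
  monotone_nat_of_le_succ fun n => by
    rw [lft_succ]
    have := mul_nonneg (h.wid_pos hκ n).le (h.v0 n)
    linarith

lemma Adm.rgt_anti (h : Adm κ u v) (hκ : 0 < κ) : Antitone fun n => lft u v n + wid u n :=
  antitone_nat_of_succ_le fun n => by
    rw [lft_succ, wid_succ]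
    have := mul_le_mul_of_nonneg_left (h.uv n) (h.wid_pos hκ n).le
    linarith

lemma Adm.term_le (h : Adm κ u v) (hκ : 0 < κ) (l : ℕ) : ‖wid u l * v l‖ ≤ (1 - κ) ^ l := by
  have h0 := h.wid_pos hκ l
  have h1 : v l ≤ 1 := by linarith [h.uv l, h.lo l]
  rw [Real.norm_of_nonneg (mul_nonneg h0.le (h.v0 l))]
  calc _ ≤ wid u l * 1 := by gcongr
    _ ≤ _ := by rw [mul_one]; exact h.wid_le hκ l

lemma Adm.summable_geom (h : Adm κ u v) (hκ : 0 < κ) : Summable fun l : ℕ => (1 - κ) ^ l :=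
  summable_geometric_of_lt_one (by linarith [h.kappa_lt hκ]) (by linarith)

lemma Adm.tendsto (h : Adm κ u v) (hκ : 0 < κ) : Tendsto (lft u v) atTop (nhds (pt u v)) :=
  (Summable.of_norm_bounded (h.summable_geom hκ) (h.term_le hκ)).hasSum.tendsto_sum_nat

lemma Adm.lft_le_pt (h : Adm κ u v) (hκ : 0 < κ) (n : ℕ) : lft u v n ≤ pt u v :=
  (h.lft_mono hκ).ge_of_tendsto (h.tendsto hκ) n

lemma Adm.pt_le (h : Adm κ u v) (hκ : 0 < κ) (n : ℕ) : pt u v ≤ lft u v n + wid u n := by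
  refine le_of_tendsto (h.tendsto hκ) (eventually_atTop.2 ⟨n, fun k hk => ?_⟩)
  have := h.rgt_anti hκ hk
  have := h.wid_pos hκ k
  simp only at *
  linarith

lemma Adm.exists_firstLevel (h : Adm κ u v) (hκ : 0 < κ) {r : ℝ} (hr : 0 < r) : ∃ n, IsFirstLevel u r n := by
  have h1 : ∃ n, wid u n ≤ r := by
    obtain ⟨n, hn⟩ := exists_pow_lt_of_lt_one hr (show 1 - κ < 1 by linarith)
    exact ⟨n, (h.wid_le hκ n).trans hn.le⟩
  classical
  exact ⟨Nat.find h1, Nat.find_spec h1, fun k hk => not_le.1 (Nat.find_min h1 hk)⟩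

lemma Adm.le_wid_firstLevel (h : Adm κ u v) (hκ : 0 < κ) {r : ℝ} (hr : 0 < r) (hr1 : r ≤ 1) {n : ℕ}
    (hn : IsFirstLevel u r n) : κ * r ≤ wid u n := by
  cases n with
  | zero =>
    have := h.kappa_lt hκ
    have : κ * r ≤ 1 * 1 := by gcongr
    simpa [wid] using this
  | succ k =>
    rw [wid_succ, mul_comm]
    exact mul_le_mul (hn.2 k (by simp)).le (h.lo k) hκ.le (h.wid_pos hκ k).le

/-- Two coded points agree through a common level as soon as their intervals at the stopping levels
of scale `r` start in the same cell of a grid of mesh `κ * r`: the grid cell is shorter than the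
intervals, so that these overlap, whereas intervals with distinct codes do not.
`P l` says that the codes agree at level `l`. -/
lemma Adm.agree {u' v' : ℕ → ℝ} {P : ℕ → Prop} {N n n' : ℕ} {r : ℝ} (h : Adm κ u v)
    (h' : Adm κ u' v') (hκ : 0 < κ) (hr : 0 < r) (hr1 : r ≤ 1)
    (heq : ∀ l, P l → u l = u' l ∧ v l = v' l)
    (hsep : ∀ l < N, ¬ P l → u l + v l ≤ v' l ∨ u' l + v' l ≤ v l)
    (hn : IsFirstLevel u r n) (hn' : IsFirstLevel u' r n') (hN : n ≤ N)
    (hfl : ⌊lft u v n / (κ * r)⌋ = ⌊lft u' v' n' / (κ * r)⌋) : n = n' ∧ ∀ l < n, P l := by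
  have hκr : 0 < κ * r := by positivity
  have hd := Int.abs_sub_lt_one_of_floor_eq_floor hfl
  rw [← sub_div, abs_div, abs_of_pos hκr, div_lt_one hκr, abs_lt] at hd
  have hw := h.le_wid_firstLevel hκ hr hr1 hn
  have hw' := h'.le_wid_firstLevel hκ hr hr1 hn'
  have key : ∀ l, l < n → l < n' → P l := by
    intro l
    induction l using Nat.strong_induction_on with
    | _ l ih =>
      intro hl hl'
      by_contra hP
      have hpre : ∀ k < l, u k = u' k ∧ v k = v' k := fun k hk =>
        heq k (ih k hk (hk.trans hl) (hk.trans hl'))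
      have e1 := lft_congr hpre
      have e2 := wid_congr fun k hk => (hpre k hk).1
      have a1 := h.lft_mono hκ (Nat.succ_le_of_lt hl)
      have a2 := h'.lft_mono hκ (Nat.succ_le_of_lt hl')
      have b1 := h.rgt_anti hκ (Nat.succ_le_of_lt hl)
      have b2 := h'.rgt_anti hκ (Nat.succ_le_of_lt hl')
      simp only [Nat.succ_eq_add_one, lft_succ, wid_succ] at a1 a2 b1 b2
      rw [← e1, ← e2] at a2 b2
      have hp := (h.wid_pos hκ l).le
      rcases hsep l (hl.trans_le hN) hP with h1 | h1
      · have := mul_le_mul_of_nonneg_left h1 hp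
        linarith
      · have := mul_le_mul_of_nonneg_left h1 hp
        linarith
  have hnn : n = n' := by
    rcases lt_trichotomy n n' with h1 | h1 | h1
    · have := wid_congr fun k (hk : k < n) => (heq k (key k hk (hk.trans h1))).1
      have := hn'.2 n h1
      linarith [hn.1]
    · exact h1
    · have := wid_congr fun k (hk : k < n') => (heq k (key k (hk.trans h1) hk)).1
      have := hn.2 n' h1
      linarith [hn'.1]
  exact ⟨hnn, fun l hl => key l hl (hnn ▸ hl)⟩

/-- The labels of two points at distance at most `r` differ by a bounded amount. -/
lemma Adm.floor_close {u' v' : ℕ → ℝ} {n n' : ℕ} {r : ℝ} (h : Adm κ u v) (h' : Adm κ u' v')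
    (hκ : 0 < κ) (hr : 0 < r) (hn : IsFirstLevel u r n) (hn' : IsFirstLevel u' r n')
    (hd : |pt u v - pt u' v'| ≤ r) :
    |⌊lft u v n / (κ * r)⌋ - ⌊lft u' v' n' / (κ * r)⌋| ≤ (⌈3 / κ + 1⌉₊ : ℤ) := by
  have hκr : 0 < κ * r := by positivity
  have h1 := h.lft_le_pt hκ n
  have h2 := h.pt_le hκ n
  have h3 := h'.lft_le_pt hκ n'
  have h4 := h'.pt_le hκ n'
  have h5 := hn.1
  have h6 := hn'.1
  rw [abs_le] at hd
  have hx : |lft u v n / (κ * r) - lft u' v' n' / (κ * r)| ≤ 3 / κ := by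
    rw [← sub_div, abs_div, abs_of_pos hκr, div_le_div_iff₀ hκr hκ]
    have : |lft u v n - lft u' v' n'| ≤ 3 * r := by
      rw [abs_le]; constructor <;> linarith
    nlinarith
  have f1 := Int.floor_le (lft u v n / (κ * r))
  have f2 := Int.lt_floor_add_one (lft u v n / (κ * r))
  have f3 := Int.floor_le (lft u' v' n' / (κ * r))
  have f4 := Int.lt_floor_add_one (lft u' v' n' / (κ * r))
  have hM := Nat.le_ceil (3 / κ + 1)
  rw [abs_le] at hx
  have : |(⌊lft u v n / (κ * r)⌋ : ℝ) - ⌊lft u' v' n' / (κ * r)⌋| ≤ (⌈3 / κ + 1⌉₊ : ℝ) := by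
    rw [abs_le]; constructor <;> linarith
  exact_mod_cast this

end

/-! ### Counting appearances -/

section
variable {m : ℕ}

/-- The number of appearances of `k` among the first `n` terms of `ω`. -/
def cnt (ω : ℕ → Fin m) (k : Fin m) (n : ℕ) : ℕ := Nat.count (fun t => ω t = k) n

/-- The sequence whose term at position `l` is `w k i`, when `l` is the place of the appearance
number `i` (counted from `0`) of the symbol `k = ω l`. -/
def pull {X : Type*} (ω : ℕ → Fin m) (w : Fin m → ℕ → X) (l : ℕ) : X := w (ω l) (cnt ω (ω l) l)

lemma cnt_zero (ω : ℕ → Fin m) (k : Fin m) : cnt ω k 0 = 0 := Nat.count_zero _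

lemma cnt_succ (ω : ℕ → Fin m) (k : Fin m) (n : ℕ) :
    cnt ω k (n + 1) = cnt ω k n + if ω n = k then 1 else 0 := Nat.count_succ _ _

lemma cnt_mono (ω : ℕ → Fin m) (k : Fin m) : Monotone (cnt ω k) := Nat.count_monotone _

lemma sum_cnt (ω : ℕ → Fin m) (n : ℕ) : ∑ k, cnt ω k n = n := by
  induction n with
  | zero => simp [cnt_zero]
  | succ n ih => simp [cnt_succ, Finset.sum_add_distrib, ih]

/-- Distinct positions of `ω` carry distinct pairs (symbol, number of its appearance). -/
lemma cnt_lt_of_lt (ω : ℕ → Fin m) {l n : ℕ} (h : l < n) : cnt ω (ω l) l < cnt ω (ω l) n := by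
  refine lt_of_lt_of_le ?_ (cnt_mono ω (ω l) (Nat.succ_le_of_lt h))
  simp [cnt_succ]

lemma wid_pull (ω : ℕ → Fin m) (w : Fin m → ℕ → ℝ) (n : ℕ) :
    wid (pull ω w) n = ∏ k, ∏ i ∈ Finset.range (cnt ω k n), w k i := by
  induction n with
  | zero => simp [cnt_zero, wid]
  | succ n ih =>
    have : ∀ k, ∏ i ∈ Finset.range (cnt ω k (n + 1)), w k i =
        (∏ i ∈ Finset.range (cnt ω k n), w k i) * if ω n = k then w k (cnt ω k n) else 1 := by
      intro k
      rw [cnt_succ]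
      split_ifs with h
      · rw [Finset.prod_range_succ]
      · simp
    rw [wid_succ, ih, Finset.prod_congr rfl fun k _ => this k, Finset.prod_mul_distrib]
    simp [pull]

lemma forall_lt_cnt {ω : ℕ → Fin m} {R : Fin m → ℕ → Prop} {n : ℕ}
    (h : ∀ l < n, pull ω R l) (k : Fin m) (i : ℕ) (hi : i < cnt ω k n) : R k i := by
  induction n with
  | zero => simp [cnt_zero] at hi
  | succ n ih =>
    rcases lt_or_ge i (cnt ω k n) with h1 | h1
    · exact ih (fun l hl => h l (by omega)) h1
    · rw [cnt_succ] at hi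
      split_ifs at hi with h2
      · have : i = cnt ω k n := by omega
        subst this
        have := h n (by omega)
        unfold pull at this
        rwa [h2] at this
      · omega

lemma forall_pull {ω ω' : ℕ → Fin m} {R : Fin m → ℕ → Prop} {n N : ℕ}
    (hN : ∀ k, cnt ω' k N ≤ cnt ω k n) (h : ∀ l < n, pull ω R l) : ∀ l < N, pull ω' R l :=
  fun _ hl => forall_lt_cnt h _ _ ((cnt_lt_of_lt ω' hl).trans_le (hN _))

/-- If the first `N` terms of `ω'` are matched, appearance by appearance, with some of the first `n`
terms of `ω`, the product over the former misses at most `n - N` factors of the product over the latter. -/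
lemma wid_pull_le {ω ω' : ℕ → Fin m} {w : Fin m → ℕ → ℝ} {κ : ℝ} (hκ : 0 < κ)
    (hw : ∀ k i, κ ≤ w k i) {n N : ℕ} (hN : ∀ k, cnt ω' k N ≤ cnt ω k n) :
    wid (pull ω' w) N * κ ^ (n - N) ≤ wid (pull ω w) n := by
  have hsum : n - N = ∑ k, (cnt ω k n - cnt ω' k N) := by
    rw [Finset.sum_tsub_distrib _ fun k _ => hN k, sum_cnt, sum_cnt]
  rw [wid_pull, wid_pull, hsum, ← Finset.prod_pow_eq_pow_sum, ← Finset.prod_mul_distrib]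
  have h0 : ∀ k i, 0 ≤ w k i := fun k i => (hκ.trans_le (hw k i)).le
  refine Finset.prod_le_prod (fun k _ => mul_nonneg (Finset.prod_nonneg fun i _ => h0 k i)
    (by positivity)) fun k _ => ?_
  rw [← Finset.prod_range_mul_prod_Ico _ (hN k)]
  refine mul_le_mul_of_nonneg_left ?_ (Finset.prod_nonneg fun i _ => h0 k i)
  calc κ ^ (cnt ω k n - cnt ω' k N) = ∏ _i ∈ Finset.Ico (cnt ω' k N) (cnt ω k n), κ := by simp
    _ ≤ _ := Finset.prod_le_prod (fun _ _ => hκ.le) fun i _ => hw k i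

/-- A limit frequency controls the counting function up to an arbitrarily small linear error. -/
lemma HasLimitFreq.exists_bound {ω : ℕ → Fin m} {k : Fin m} {P : ℝ} (h : HasLimitFreq ω k P)
    {η : ℝ} (hη : 0 < η) : ∃ C : ℝ, 0 ≤ C ∧ ∀ n : ℕ, |(cnt ω k n : ℝ) - P * n| ≤ η * n + C := by
  have h1 := Metric.tendsto_atTop.1 h η hη
  obtain ⟨N, hN⟩ := h1
  refine ⟨(1 + |P|) * N, by positivity, fun n => ?_⟩
  rcases le_or_gt N n with hn | hn
  · have h2 := hN n hn
    rcases Nat.eq_zero_or_pos n with h0 | h0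
    · subst h0
      simp [cnt_zero]; positivity
    have hn0 : (0 : ℝ) < n := by exact_mod_cast h0
    rw [← Nat.count_eq_card_filter_range, Real.dist_eq, div_sub' hn0.ne', abs_div,
      abs_of_pos hn0, div_lt_iff₀ hn0] at h2
    have : (0 : ℝ) ≤ (1 + |P|) * N := by positivity
    have h3 : |(cnt ω k n : ℝ) - n * P| < η * n := h2
    rw [mul_comm P]
    linarith
  · have hc : (cnt ω k n : ℝ) ≤ n := Nat.cast_le.2 (Nat.count_le _)
    have hnN : (n : ℝ) ≤ N := by exact_mod_cast hn.le
    calc |(cnt ω k n : ℝ) - P * n| ≤ |(cnt ω k n : ℝ)| + |P * n| := abs_sub _ _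
      _ = cnt ω k n + |P| * n := by simp [abs_mul]
      _ ≤ N + |P| * N := add_le_add (hc.trans hnN) (by gcongr)
      _ ≤ _ := by
        have : 0 ≤ η * n := by positivity
        linarith

/-- If the limit frequencies of `ω` and `ω'` are `δ`-close, the first `n` terms of `ω` can be matched
with all but a proportion `O(δ)` of the first `n` terms of `ω'`. -/
lemma exists_matching {ω ω' : ℕ → Fin m} {P P' : Fin m → ℝ} (h : ∀ k, HasLimitFreq ω k (P k))
    (h' : ∀ k, HasLimitFreq ω' k (P' k)) {q δ η : ℝ} (hq : 0 < q) (hP' : ∀ k, q ≤ P' k)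
    (hδ : 0 ≤ δ) (hPP : ∀ k, |P k - P' k| ≤ δ) (hη : 0 < η) :
    ∃ D : ℝ, ∀ n : ℕ, ∃ N : ℕ, (∀ k, cnt ω' k N ≤ cnt ω k n) ∧
      ((n - N : ℕ) : ℝ) ≤ (δ + 2 * η) / q * n + D := by
  choose C hC0 hC using fun k => (h k).exists_bound hη
  choose C' hC0' hC' using fun k => (h' k).exists_bound hη
  set B := ∑ k, (C k + C' k)
  have hB0 : 0 ≤ B := Finset.sum_nonneg fun k _ => add_nonneg (hC0 k) (hC0' k)
  have hCB : ∀ k, C k + C' k ≤ B := fun k =>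
    Finset.single_le_sum (f := fun k => C k + C' k)
      (fun k _ => add_nonneg (hC0 k) (hC0' k)) (Finset.mem_univ k)
  set θ := (δ + 2 * η) / q
  have hθ : θ * q = δ + 2 * η := div_mul_cancel₀ _ hq.ne'
  have hθ0 : 0 ≤ θ := by positivity
  refine ⟨2 * B / q + 1, fun n => ⟨⌊(1 - θ) * n - 2 * B / q⌋₊, fun k => ?_, ?_⟩⟩
  · set t := (1 - θ) * n - 2 * B / q with ht
    rcases lt_or_ge t 0 with h0 | h0
    · rw [Nat.floor_of_nonpos h0.le, cnt_zero]; exact Nat.zero_le _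
    have hfl := Nat.floor_le h0
    have h1 := (abs_le.1 (hC' k ⌊t⌋₊)).2
    have h2 := (abs_le.1 (hC k n)).1
    have h3 := (abs_le.1 (hPP k)).1
    have h4 : (P' k + η) * (⌊t⌋₊ : ℝ) ≤ (P' k + η) * t := by
      have := hP' k
      gcongr
      linarith
    have hn0 : (0 : ℝ) ≤ n := Nat.cast_nonneg n
    have h5 : (q : ℝ) * (θ * n + 2 * B / q) ≤ (P' k + η) * (θ * n + 2 * B / q) := by
      have := hP' k
      gcongr
      linarith
    have h6 : q * (θ * n + 2 * B / q) = (δ + 2 * η) * n + 2 * B := by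
      rw [mul_add, mul_div_cancel₀ _ hq.ne', ← hθ]; ring
    have h7 : (P' k + η) * t = (P' k + η) * n - (P' k + η) * (θ * n + 2 * B / q) := by
      rw [ht]; ring
    have h8 := hCB k
    have h9 := hC0 k
    have h10 := hC0' k
    have h11 : (P' k - P k) * n ≤ δ * n := by gcongr; linarith
    have : (cnt ω' k ⌊t⌋₊ : ℝ) ≤ cnt ω k n := by nlinarith
    exact_mod_cast this
  · have hf := Nat.lt_floor_add_one ((1 - θ) * n - 2 * B / q)
    rcases le_total n ⌊(1 - θ) * n - 2 * B / q⌋₊ with h1 | h1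
    · rw [Nat.sub_eq_zero_of_le h1]
      have : (0 : ℝ) ≤ θ * n + (2 * B / q + 1) := by positivity
      simpa using this
    · rw [Nat.cast_sub h1]
      linarith

end

/-- The exponent comparing the number of factors `κ` with the scale: it is the number `τ` with
`(1 - κ) ^ τ = κ`. -/
noncomputable def tau (κ : ℝ) : ℝ := Real.log κ / Real.log (1 - κ)

/-- At scale `r` the stopping level `n` is at most logarithmic in `1 / r`, so that losing a proportion
`θ` of the factors costs at most a power of `r` proportional to `θ`. -/
lemma pow_mul_le {κ θ D r : ℝ} (hκ : 0 < κ) (hκ1 : κ < 1) (hθ : 0 ≤ θ) (hr : 0 < r) {n k : ℕ}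
    (hn : κ * r ≤ (1 - κ) ^ n) (hk : (k : ℝ) ≤ θ * n + D) :
    (κ⁻¹) ^ k * r ≤ κ ^ (-(tau κ * θ)) * κ ^ (-D) * r ^ (1 - tau κ * θ) := by
  have hlκ : Real.log κ < 0 := Real.log_neg hκ hκ1
  have hl1 : Real.log (1 - κ) < 0 := Real.log_neg (by linarith) (by linarith)
  have hn' := Real.log_le_log (by positivity) hn
  rw [Real.log_mul hκ.ne' hr.ne', Real.log_pow] at hn'
  rw [← Real.log_le_log_iff (by positivity) (by positivity)]
  rw [Real.log_mul (by positivity) (by positivity), Real.log_mul (by positivity) (by positivity),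
    Real.log_mul (by positivity) (by positivity), Real.log_pow, Real.log_inv, Real.log_rpow hκ,
    Real.log_rpow hκ, Real.log_rpow hr]
  have ht : tau κ * Real.log (1 - κ) = Real.log κ := div_mul_cancel₀ _ hl1.ne
  have ht0 : 0 < tau κ := div_pos_of_neg_of_neg hlκ hl1
  have h1 : (k : ℝ) * -Real.log κ ≤ (θ * n + D) * -Real.log κ := by
    gcongr; linarith
  have h2 := mul_le_mul_of_nonneg_left hn' (mul_nonneg ht0.le hθ)
  have h3 : tau κ * θ * (n * Real.log (1 - κ)) = θ * n * Real.log κ := by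
    rw [← ht]; ring
  linarith

/-! ### Coding of limit sets -/

/-- In an ordered family of non-overlapping intervals `[c j, a j + c j]` of `[0,1]`, it suffices to
compare neighbours. -/
lemma stacked {n : ℕ} (hn : 0 < n) {a c : Fin n → ℝ} (ha : ∀ j, 0 < a j) (h0 : 0 ≤ c ⟨0, hn⟩)
    (hs : ∀ (j : Fin n) (h : (j : ℕ) + 1 < n), a j + c j ≤ c ⟨(j : ℕ) + 1, h⟩)
    (h1 : c ⟨n - 1, Nat.sub_lt hn Nat.one_pos⟩ ≤ 1 - a ⟨n - 1, Nat.sub_lt hn Nat.one_pos⟩) :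
    (∀ j, 0 ≤ c j) ∧ (∀ j, a j + c j ≤ 1) ∧ ∀ j j', j < j' → a j + c j ≤ c j' := by
  have key : ∀ d : ℕ, ∀ j j' : Fin n, (j' : ℕ) = j + 1 + d → a j + c j ≤ c j' := by
    intro d
    induction d with
    | zero =>
      intro j j' h
      have := hs j (by omega)
      rwa [show (⟨(j : ℕ) + 1, by omega⟩ : Fin n) = j' from Fin.ext (by simp; omega)] at this
    | succ d ih =>
      intro j j' h
      have e1 := ih j ⟨j + 1 + d, by omega⟩ rfl
      have e2 := hs ⟨j + 1 + d, by omega⟩ (by simp; omega)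
      rw [show (⟨(⟨j + 1 + d, by omega⟩ : Fin n) + 1, by simp; omega⟩ : Fin n) = j' from
        Fin.ext (by simp; omega)] at e2
      linarith [ha ⟨j + 1 + d, by omega⟩]
  have key' : ∀ j j', j < j' → a j + c j ≤ c j' := fun j j' h => by
    rw [Fin.lt_def] at h
    exact key (j' - j - 1) j j' (by omega)
  refine ⟨fun j => ?_, fun j => ?_, key'⟩
  · rcases Nat.eq_zero_or_pos j with h | h
    · rwa [show j = ⟨0, hn⟩ from Fin.ext h]
    · linarith [key' ⟨0, hn⟩ j (Fin.lt_def.2 h), ha ⟨0, hn⟩]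
  · rcases lt_or_ge (j : ℕ) (n - 1) with h | h
    · linarith [key' j ⟨n - 1, by omega⟩ (Fin.lt_def.2 h), ha ⟨n - 1, by omega⟩]
    · rw [show j = ⟨n - 1, by omega⟩ from Fin.ext (by simp; omega)]
      linarith

lemma LGScheme.rows (T : LGScheme) : (∀ j, 0 ≤ T.d j) ∧ (∀ j, T.b j + T.d j ≤ 1) ∧
    ∀ j j', j < j' → T.b j + T.d j ≤ T.d j' :=
  stacked T.hm₁ (fun i => (T.ha_pos i ⟨0, T.hm₂ i⟩).trans_le (T.hab i _)) T.hd_first T.hd_step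
    T.hd_last

lemma LGScheme.cols (T : LGScheme) (i : Fin T.m₁) : (∀ j, 0 ≤ T.c i j) ∧
    (∀ j, T.a i j + T.c i j ≤ 1) ∧ ∀ j j', j < j' → T.a i j + T.c i j ≤ T.c i j' :=
  stacked (T.hm₂ i) (T.ha_pos i) (T.hc_first i) (T.hc_step i) (T.hc_last i)

/-- The contraction ratios of the scheme lie in `[κ, 1 - κ]`. -/
def LGScheme.Bounded (T : LGScheme) (κ : ℝ) : Prop :=
  (∀ i j, κ ≤ T.a i j) ∧ ∀ i, T.b i ≤ 1 - κ

lemma LGScheme.exists_bounded (T : LGScheme) : ∃ κ, 0 < κ ∧ T.Bounded κ := by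
  have : Nonempty (Fin T.m₁) := ⟨⟨0, T.hm₁⟩⟩
  have : ∀ i, Nonempty (Fin (T.m₂ i)) := fun i => ⟨⟨0, T.hm₂ i⟩⟩
  have i0 : Fin T.m₁ := ⟨0, T.hm₁⟩
  have : Nonempty ((i : Fin T.m₁) × Fin (T.m₂ i)) := ⟨⟨i0, ⟨0, T.hm₂ i0⟩⟩⟩
  obtain ⟨s, hs⟩ := Finite.exists_min fun s : (i : Fin T.m₁) × Fin (T.m₂ i) => T.a s.1 s.2
  obtain ⟨t, ht⟩ := Finite.exists_max T.b
  refine ⟨min (T.a s.1 s.2) (1 - T.b t), lt_min (T.ha_pos _ _) (by linarith [T.hb_lt_one t]),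
    fun i j => (min_le_left _ _).trans (hs ⟨i, j⟩), fun i => ?_⟩
  linarith [min_le_right (T.a s.1 s.2) (1 - T.b t), ht i]

lemma exists_kappa {m : ℕ} (S : Fin m → LGScheme) : ∃ κ, 0 < κ ∧ ∀ k, (S k).Bounded κ := by
  rcases isEmpty_or_nonempty (Fin m) with hm | hm
  · exact ⟨1, one_pos, fun k => hm.elim k⟩
  choose κ hκ hb using fun k => (S k).exists_bounded
  obtain ⟨k0, hk0⟩ := Finite.exists_min κ
  exact ⟨κ k0, hκ k0, fun k => ⟨fun i j => (hk0 k).trans ((hb k).1 i j),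
    fun i => by linarith [hk0 k, (hb k).2 i]⟩⟩

section
variable {m : ℕ} {S : Fin m → LGScheme} {κ : ℝ}

/-- A common coding space for the limit sets of all sequences `ω`: the symbol `y k i` is the one used
at the appearance number `i` of the scheme `k`. -/
abbrev Code (S : Fin m → LGScheme) : Type := (k : Fin m) → ℕ → (S k).Sym

/-- The horizontal contraction ratios of the symbols of `y`. -/
def Code.a (y : Code S) (k : Fin m) (i : ℕ) : ℝ := (S k).a (y k i).1 (y k i).2
/-- The vertical contraction ratios of the symbols of `y`. -/
def Code.b (y : Code S) (k : Fin m) (i : ℕ) : ℝ := (S k).b (y k i).1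
/-- The horizontal translations of the symbols of `y`. -/
def Code.c (y : Code S) (k : Fin m) (i : ℕ) : ℝ := (S k).c (y k i).1 (y k i).2
/-- The vertical translations of the symbols of `y`. -/
def Code.d (y : Code S) (k : Fin m) (i : ℕ) : ℝ := (S k).d (y k i).1

/-- The coding map of the limit set of `ω`. -/
noncomputable def Code.proj (ω : ℕ → Fin m) (y : Code S) : ℝ × ℝ :=
  (pt (pull ω y.a) (pull ω y.c), pt (pull ω y.b) (pull ω y.d))

lemma Code.adm_x (hS : ∀ k, (S k).Bounded κ) (ω : ℕ → Fin m) (y : Code S) :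
    Adm κ (pull ω y.a) (pull ω y.c) where
  lo _ := (hS _).1 _ _
  hi _ := ((S _).hab _ _).trans ((hS _).2 _)
  v0 _ := ((S _).cols _).1 _
  uv _ := ((S _).cols _).2.1 _

lemma Code.adm_y (hS : ∀ k, (S k).Bounded κ) (ω : ℕ → Fin m) (y : Code S) :
    Adm κ (pull ω y.b) (pull ω y.d) where
  lo _ := ((hS _).1 _ (y _ _).2).trans ((S _).hab _ _)
  hi _ := (hS _).2 _
  v0 _ := (S _).rows.1 _
  uv _ := (S _).rows.2.1 _

lemma Code.sep_y (y y' : Code S) (k : Fin m) (i : ℕ) (h : (y k i).1 ≠ (y' k i).1) :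
    y.b k i + y.d k i ≤ y'.d k i ∨ y'.b k i + y'.d k i ≤ y.d k i :=
  (lt_or_gt_of_ne h).imp ((S k).rows.2.2 _ _) ((S k).rows.2.2 _ _)

lemma Code.sep_x (y y' : Code S) (k : Fin m) (i : ℕ) (h1 : (y k i).1 = (y' k i).1)
    (h : y k i ≠ y' k i) :
    y.a k i + y.c k i ≤ y'.c k i ∨ y'.a k i + y'.c k i ≤ y.c k i := by
  unfold Code.a Code.c
  generalize y k i = s at *
  generalize y' k i = s' at *
  obtain ⟨p, j⟩ := s
  obtain ⟨p', j'⟩ := s'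
  obtain rfl : p = p' := h1
  have hj : j ≠ j' := fun e => h (by rw [e])
  exact (lt_or_gt_of_ne hj).imp (((S k).cols p).2.2 _ _) (((S k).cols p).2.2 _ _)

lemma pt_dist_le {u v u' v' : ℕ → ℝ} (h : Adm κ u v) (h' : Adm κ u' v') (hκ : 0 < κ) {N : ℕ}
    (heq : ∀ l < N, u l = u' l ∧ v l = v' l) : |pt u v - pt u' v'| ≤ wid u N := by
  have h1 := h.lft_le_pt hκ N
  have h2 := h.pt_le hκ N
  have h3 := h'.lft_le_pt hκ N
  have h4 := h'.pt_le hκ N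
  rw [← lft_congr heq, ← wid_congr fun l hl => (heq l hl).1] at *
  rw [abs_le]
  constructor <;> linarith

/-- The coding of the limit set of `ω'` by that of `ω` is, up to bounded multiplicity, Hölder with
exponent `1 - tau κ * θ`, when all but a proportion `θ` of the first terms of the two sequences can be
matched. -/
lemma dimH_range_proj_le (hκ : 0 < κ) (hS : ∀ k, (S k).Bounded κ) {ω ω' : ℕ → Fin m} {θ D : ℝ}
    (hθ : 0 ≤ θ)
    (hN : ∀ n : ℕ, ∃ N : ℕ, (∀ k, cnt ω' k N ≤ cnt ω k n) ∧ ((n - N : ℕ) : ℝ) ≤ θ * n + D)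
    (hpos : 0 < 1 - tau κ * θ) :
    dimH (Set.range (Code.proj (S := S) ω')) * ENNReal.ofReal (1 - tau κ * θ) ≤
      dimH (Set.range (Code.proj (S := S) ω)) := by
  rcases isEmpty_or_nonempty (Code S) with hY | ⟨⟨y0⟩⟩
  · simp [Set.range_eq_empty]
  have hκ1 := (y0.adm_x hS ω).kappa_lt hκ
  refine dimH_range_mul_le _ _ hpos (C := κ ^ (-(tau κ * θ)) * κ ^ (-D)) (by positivity)
    ⌈3 / κ + 1⌉₊ fun r hr hr1 => ?_
  choose n1 hn1 using fun y : Code S => (y.adm_x hS ω).exists_firstLevel hκ hr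
  choose n2 hn2 using fun y : Code S => (y.adm_y hS ω).exists_firstLevel hκ hr
  have hn12 : ∀ y, n1 y ≤ n2 y := by
    intro y
    by_contra hlt
    have h1 := (hn1 y).2 _ (not_le.1 hlt)
    have h2 : wid (pull ω y.a) (n2 y) ≤ wid (pull ω y.b) (n2 y) :=
      Finset.prod_le_prod (fun l _ => (hκ.trans_le ((y.adm_x hS ω).lo l)).le)
        fun l _ => (S _).hab _ _
    linarith [(hn2 y).1]
  -- matched codes give points of the second set which are close at the scale `r ^ (1 - tau κ * θ)`
  have close : ∀ (w w' v v' : Fin m → ℕ → ℝ) (R : Fin m → ℕ → Prop) (n : ℕ),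
      Adm κ (pull ω w) (pull ω v) →
      Adm κ (pull ω' w) (pull ω' v) → Adm κ (pull ω' w') (pull ω' v') →
      (∀ k i, κ ≤ w k i) → (∀ k i, R k i → w k i = w' k i ∧ v k i = v' k i) →
      IsFirstLevel (pull ω w) r n → (∀ l < n, pull ω R l) →
      |pt (pull ω' w) (pull ω' v) - pt (pull ω' w') (pull ω' v')| ≤
        κ ^ (-(tau κ * θ)) * κ ^ (-D) * r ^ (1 - tau κ * θ) := by
    intro w w' v v' R n ha0 ha ha' hw hR hn hag
    obtain ⟨N, hN1, hN2⟩ := hN n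
    have h1 : ∀ l < N, pull ω' w l = pull ω' w' l ∧ pull ω' v l = pull ω' v' l :=
      fun l hl => hR _ _ (forall_pull hN1 hag l hl)
    refine (pt_dist_le ha ha' hκ h1).trans (le_trans ?_ (pow_mul_le hκ hκ1 hθ hr
      ((ha0.le_wid_firstLevel hκ hr hr1 hn).trans (ha0.wid_le hκ n)) hN2))
    have h2 := (wid_pull_le hκ hw hN1).trans hn.1
    rw [inv_pow, ← div_eq_inv_mul, le_div_iff₀ (by positivity)]
    exact h2
  refine ⟨fun y => (⌊lft (pull ω y.a) (pull ω y.c) (n1 y) / (κ * r)⌋,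
    ⌊lft (pull ω y.b) (pull ω y.d) (n2 y) / (κ * r)⌋), fun y y' hd => ?_, fun y y' hl => ?_⟩
  · rw [Prod.dist_eq, max_le_iff] at hd
    exact ⟨(y.adm_x hS ω).floor_close (y'.adm_x hS ω) hκ hr (hn1 y) (hn1 y') hd.1,
      (y.adm_y hS ω).floor_close (y'.adm_y hS ω) hκ hr (hn2 y) (hn2 y') hd.2⟩
  · obtain ⟨hlx, hly⟩ := Prod.ext_iff.1 hl
    simp only at hlx hly
    have hRy : ∀ k i, (y k i).1 = (y' k i).1 → y.b k i = y'.b k i ∧ y.d k i = y'.d k i := by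
      intro k i h
      simp [Code.b, Code.d, h]
    have hRx : ∀ k i, y k i = y' k i → y.a k i = y'.a k i ∧ y.c k i = y'.c k i := by
      intro k i h
      unfold Code.a Code.c
      rw [h]
      exact ⟨rfl, rfl⟩
    obtain ⟨-, hag2⟩ := (y.adm_y hS ω).agree (y'.adm_y hS ω) hκ hr hr1 (N := n2 y)
      (P := pull ω fun k i => (y k i).1 = (y' k i).1) (fun l h => hRy _ _ h)
      (fun l _ h => y.sep_y y' _ _ h) (hn2 y) (hn2 y') le_rfl hly
    obtain ⟨-, hag1⟩ := (y.adm_x hS ω).agree (y'.adm_x hS ω) hκ hr hr1 (N := n2 y)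
      (P := pull ω fun k i => y k i = y' k i) (fun l h => hRx _ _ h)
      (fun l hl h => y.sep_x y' _ _ (hag2 l hl) h) (hn1 y) (hn1 y') (hn12 y) hlx
    rw [Prod.dist_eq]
    exact max_le
      (close y.a y'.a y.c y'.c (fun k i => y k i = y' k i) (n1 y) (y.adm_x hS ω) (y.adm_x hS ω')
        (y'.adm_x hS ω') (fun k i => (hS k).1 _ _) hRx (hn1 y) hag1)
      (close y.b y'.b y.d y'.d (fun k i => (y k i).1 = (y' k i).1) (n2 y) (y.adm_y hS ω)
        (y.adm_y hS ω') (y'.adm_y hS ω')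
        (fun k i => ((hS k).1 _ (y k i).2).trans ((S k).hab _ _)) hRy (hn2 y) hag2)

end

section
variable {m : ℕ} {S : Fin m → LGScheme} {κ : ℝ}

instance (T : LGScheme) : Nonempty T.Sym := ⟨⟨⟨0, T.hm₁⟩, ⟨0, T.hm₂ _⟩⟩⟩

instance (T : LGScheme) : Finite T.Sym :=
  inferInstanceAs (Finite ((i : Fin T.m₁) × Fin (T.m₂ i)))

/-- A code can be modified at the symbol used at position `n` of `ω` without changing the symbols
used at the previous positions. -/
lemma Code.exists_update (ω : ℕ → Fin m) (n : ℕ) (y : Code S) (s : (S (ω n)).Sym) :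
    ∃ y' : Code S, (∀ l < n, y' (ω l) (cnt ω (ω l) l) = y (ω l) (cnt ω (ω l) l)) ∧
      y' (ω n) (cnt ω (ω n) n) = s := by
  have key : ∀ k i, (k = ω n → i ≠ cnt ω (ω n) n) →
      Function.update y (ω n) (Function.update (y (ω n)) (cnt ω (ω n) n) s) k i = y k i := by
    intro k i h
    by_cases hk : k = ω n
    · subst hk
      rw [Function.update_self, Function.update_of_ne (h rfl)]
    · rw [Function.update_of_ne hk]
  refine ⟨_, fun l hl => key _ _ fun h => ?_, by simp⟩
  have := cnt_lt_of_lt ω hl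
  rw [h] at this ⊢
  exact this.ne

/-- The iterated Hutchinson operators are unions of images under the compositions of maps given by
the codes. -/
lemma mem_foldr_iff (ω : ℕ → Fin m) (n : ℕ) (A : Set (ℝ × ℝ)) (z : ℝ × ℝ) :
    z ∈ (List.range n).foldr (fun k B => (S (ω k)).hutch B) A ↔ ∃ y : Code S, ∃ p ∈ A,
      z = (wid (pull ω y.a) n * p.1 + lft (pull ω y.a) (pull ω y.c) n,
        wid (pull ω y.b) n * p.2 + lft (pull ω y.b) (pull ω y.d) n) := by
  induction n generalizing A z with
  | zero => simp [wid, lft]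
  | succ n ih =>
    rw [List.range_succ, List.foldr_append]
    simp only [List.foldr_cons, List.foldr_nil]
    rw [ih]
    constructor
    · rintro ⟨y, p, hp, rfl⟩
      obtain ⟨s, p', hp', rfl⟩ := Set.mem_iUnion.1 hp
      obtain ⟨y', h1, h2⟩ := Code.exists_update ω n y s
      refine ⟨y', p', hp', ?_⟩
      have ha : ∀ l < n, pull ω y'.a l = pull ω y.a l := fun l hl => by
        unfold pull Code.a; rw [h1 l hl]
      have hc : ∀ l < n, pull ω y'.c l = pull ω y.c l := fun l hl => by
        unfold pull Code.c; rw [h1 l hl]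
      have hb : ∀ l < n, pull ω y'.b l = pull ω y.b l := fun l hl => by
        unfold pull Code.b; rw [h1 l hl]
      have hd : ∀ l < n, pull ω y'.d l = pull ω y.d l := fun l hl => by
        unfold pull Code.d; rw [h1 l hl]
      rw [wid_succ, wid_succ, lft_succ, lft_succ, wid_congr ha, wid_congr hb,
        lft_congr fun l hl => ⟨ha l hl, hc l hl⟩, lft_congr fun l hl => ⟨hb l hl, hd l hl⟩]
      have ea : pull ω y'.a n = (S (ω n)).a s.1 s.2 := by unfold pull Code.a; rw [h2]
      have eb : pull ω y'.b n = (S (ω n)).b s.1 := by unfold pull Code.b; rw [h2]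
      have ec : pull ω y'.c n = (S (ω n)).c s.1 s.2 := by unfold pull Code.c; rw [h2]
      have ed : pull ω y'.d n = (S (ω n)).d s.1 := by unfold pull Code.d; rw [h2]
      rw [ea, eb, ec, ed]
      simp only [LGScheme.toMap]
      ext <;> ring
    · rintro ⟨y, p, hp, rfl⟩
      refine ⟨y, (S (ω n)).toMap (y (ω n) (cnt ω (ω n) n)) p,
        Set.mem_iUnion.2 ⟨_, p, hp, rfl⟩, ?_⟩
      rw [wid_succ, wid_succ, lft_succ, lft_succ]
      simp only [LGScheme.toMap, pull, Code.a, Code.b, Code.c, Code.d]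
      ext <;> ring

/-- The coded set is compact, by Tychonoff's theorem for the product of the finite alphabets. -/
lemma isCompact_range_proj (hκ : 0 < κ) (hS : ∀ k, (S k).Bounded κ) (ω : ℕ → Fin m) :
    IsCompact (Set.range (Code.proj (S := S) ω)) := by
  let _ : ∀ k, TopologicalSpace (S k).Sym := fun _ => ⊥
  have : ∀ k, DiscreteTopology (S k).Sym := fun _ => ⟨rfl⟩
  have y0 : Code S := fun k _ => Classical.arbitrary _
  have hsymb : ∀ (k : Fin m) (φ : (S k).Sym → ℝ) (i : ℕ), Continuous fun y : Code S => φ (y k i) :=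
    fun k φ i => continuous_of_discreteTopology.comp
      ((continuous_apply i).comp (continuous_apply k))
  have hsum := (y0.adm_x hS ω).summable_geom hκ
  refine isCompact_range (Continuous.prodMk ?_ ?_)
  · refine continuous_tsum (fun l => ?_) hsum fun l y => (y.adm_x hS ω).term_le hκ l
    exact (continuous_finsetProd _ fun i _ => hsymb _ (fun s => (S (ω i)).a s.1 s.2) _).mul
      (hsymb _ (fun s => (S (ω l)).c s.1 s.2) _)
  · refine continuous_tsum (fun l => ?_) hsum fun l y => (y.adm_y hS ω).term_le hκ l
    exact (continuous_finsetProd _ fun i _ => hsymb _ (fun s => (S (ω i)).b s.1) _).mul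
      (hsymb _ (fun s => (S (ω l)).d s.1) _)

lemma IsLimitSet.eq_range (hκ : 0 < κ) (hS : ∀ k, (S k).Bounded κ) {ω : ℕ → Fin m}
    {Λ : Set (ℝ × ℝ)} (h : IsLimitSet S ω Λ) : Λ = Set.range (Code.proj (S := S) ω) := by
  obtain ⟨hne, hcomp, hlim⟩ := h
  have hR := isCompact_range_proj hκ hS ω
  let y0 : Code S := fun k _ => Classical.arbitrary _
  have hRne : (Set.range (Code.proj (S := S) ω)).Nonempty := ⟨_, y0, rfl⟩
  have h0 := hlim {0} (Set.singleton_nonempty _) isCompact_singleton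
  set F : ℕ → Set (ℝ × ℝ) :=
    fun n => (List.range n).foldr (fun k B => (S (ω k)).hutch B) {0} with hF
  have hmem : ∀ n z, z ∈ F n ↔ ∃ y : Code S,
      z = (lft (pull ω y.a) (pull ω y.c) n, lft (pull ω y.b) (pull ω y.d) n) := by
    intro n z
    rw [hF, mem_foldr_iff]
    simp
  have hFne : ∀ n, (F n).Nonempty := fun n => ⟨_, (hmem n _).2 ⟨y0, rfl⟩⟩
  have hbd : ∀ {u v : ℕ → ℝ}, Adm κ u v → ∀ n, lft u v n ∈ Set.Icc (0 : ℝ) 1 := by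
    intro u v huv n
    have h1 := huv.lft_mono hκ (Nat.zero_le n)
    have h2 := huv.rgt_anti hκ (Nat.zero_le n)
    have h3 := huv.wid_pos hκ n
    simp only [lft, wid, Finset.range_zero, Finset.sum_empty, Finset.prod_empty] at h1 h2 h3 ⊢
    exact ⟨h1, by linarith⟩
  have hFb : ∀ n, Bornology.IsBounded (F n) := by
    intro n
    refine (Metric.isBounded_Icc ((0 : ℝ), (0 : ℝ)) (1, 1)).subset fun z hz => ?_
    obtain ⟨y, rfl⟩ := (hmem n z).1 hz
    have h1 := hbd (y.adm_x hS ω) n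
    have h2 := hbd (y.adm_y hS ω) n
    exact ⟨⟨h1.1, h2.1⟩, ⟨h1.2, h2.2⟩⟩
  have hdist1 : ∀ {u v : ℕ → ℝ}, Adm κ u v → ∀ n, dist (lft u v n) (pt u v) ≤ (1 - κ) ^ n := by
    intro u v huv n
    have h1 := huv.lft_le_pt hκ n
    have h2 := huv.pt_le hκ n
    have h3 := huv.wid_le hκ n
    rw [Real.dist_eq, abs_le]
    constructor <;> linarith [huv.wid_pos hκ n]
  have hdist : ∀ (y : Code S) n,
      dist (lft (pull ω y.a) (pull ω y.c) n, lft (pull ω y.b) (pull ω y.d) n) (y.proj ω) ≤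
        (1 - κ) ^ n := fun y n => by
    rw [Prod.dist_eq]
    exact max_le (hdist1 (y.adm_x hS ω) n) (hdist1 (y.adm_y hS ω) n)
  have hκ1 := (y0.adm_x hS ω).kappa_lt hκ
  have h1 : ∀ n, hausdorffDist (F n) (Set.range (Code.proj (S := S) ω)) ≤ (1 - κ) ^ n := by
    intro n
    refine hausdorffDist_le_of_mem_dist (pow_nonneg (by linarith) n) ?_ ?_
    · intro z hz
      obtain ⟨y, rfl⟩ := (hmem n z).1 hz
      exact ⟨_, ⟨y, rfl⟩, hdist y n⟩
    · rintro _ ⟨y, rfl⟩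
      exact ⟨_, (hmem n _).2 ⟨y, rfl⟩, by rw [dist_comm]; exact hdist y n⟩
  have h2 : ∀ n, hausdorffDist Λ (Set.range (Code.proj (S := S) ω)) ≤
      hausdorffDist (F n) Λ + (1 - κ) ^ n := by
    intro n
    refine (hausdorffDist_triangle (t := F n) (hausdorffEDist_ne_top_of_nonempty_of_bounded
      hne (hFne n) hcomp.isBounded (hFb n))).trans ?_
    rw [hausdorffDist_comm (s := Λ)]
    exact add_le_add le_rfl (h1 n)
  have h3 : hausdorffDist Λ (Set.range (Code.proj (S := S) ω)) ≤ 0 + 0 :=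
    ge_of_tendsto' (h0.add (tendsto_pow_atTop_nhds_zero_of_lt_one (by linarith) (by linarith))) h2
  rw [add_zero] at h3
  exact (hcomp.isClosed.hausdorffDist_zero_iff_eq hR.isClosed
    (hausdorffEDist_ne_top_of_nonempty_of_bounded hne hRne hcomp.isBounded hR.isBounded)).1
    (le_antisymm h3 hausdorffDist_nonneg)

end

/-! ### Comparison of two limit sets -/

/-- The one-sided comparison. The exponent `1 - tau κ * θ` is available for every `θ > δ / q`; the
stated bound is the limit as `θ` decreases to `δ / q`. -/
lemma dimH_limitSet_le {m : ℕ} {S : Fin m → LGScheme} {κ : ℝ} (hκ : 0 < κ) (hκ1 : κ < 1)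
    (hS : ∀ k, (S k).Bounded κ) {q δ : ℝ} (hq : 0 < q) (hδ : 0 ≤ δ) {ω ω' : ℕ → Fin m}
    {P P' : Fin m → ℝ} (h : ∀ k, HasLimitFreq ω k (P k)) (h' : ∀ k, HasLimitFreq ω' k (P' k))
    (hP' : ∀ k, q ≤ P' k) (hPP : ∀ k, |P k - P' k| ≤ δ) {Λ Λ' : Set (ℝ × ℝ)}
    (hΛ : IsLimitSet S ω Λ) (hΛ' : IsLimitSet S ω' Λ') :
    dimH Λ' * ENNReal.ofReal (1 - tau κ / q * δ) ≤ dimH Λ := by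
  rw [hΛ.eq_range hκ hS, hΛ'.eq_range hκ hS]
  have ht0 : 0 < tau κ :=
    div_pos_of_neg_of_neg (Real.log_neg hκ hκ1) (Real.log_neg (by linarith) (by linarith))
  set G : ℝ → ℝ := fun η => 1 - tau κ * ((δ + 2 * η) / q) with hG
  have hG0 : G 0 = 1 - tau κ / q * δ := by simp [hG]; ring
  rw [← hG0]
  rcases le_or_gt (G 0) 0 with h0 | h0
  · simp [ENNReal.ofReal_of_nonpos h0]
  have hcont : Continuous G := by fun_prop
  have htend : Tendsto G (nhdsWithin 0 (Set.Ioi 0)) (nhds (G 0)) :=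
    (hcont.tendsto 0).mono_left nhdsWithin_le_nhds
  refine le_of_tendsto (ENNReal.Tendsto.const_mul (ENNReal.tendsto_ofReal htend)
    (Or.inl (by simpa using h0))) ?_
  filter_upwards [htend.eventually (lt_mem_nhds h0), self_mem_nhdsWithin] with η hη hη0
  obtain ⟨D, hD⟩ := exists_matching h h' hq hP' hδ hPP (Set.mem_Ioi.1 hη0)
  have hη0' : 0 < η := hη0
  exact dimH_range_proj_le hκ hS (by positivity) hD hη

/-- Let `S 1, …, S m` be Lalley–Gatzouras schemes and let
`ω ∈ {1,…,m}^ℕ` have positive limit frequencies `P`, bounded below by `p > 0`.  Then there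
are constants `K > 0` and `δ₀ > 0`, depending only on the schemes and on `p`, such that
for every positive rational probability vector `Q` with `δ = max_k |P k − Q k| ≤ δ₀` and
every periodic sequence `ω(Q)` with limit frequencies `Q`, writing
`L = dim_H Λ_{ω(Q)}` one has `L (1 − K δ) ≤ dim_H Λ_ω ≤ L (1 + K δ)`. -/
theorem statement13 {m : ℕ} (hm : 0 < m) (S : Fin m → LGScheme) (p : ℝ) (hp : 0 < p) :
    ∃ K : ℝ, 0 < K ∧ ∃ δ₀ : ℝ, 0 < δ₀ ∧
      ∀ (ω : ℕ → Fin m) (P : Fin m → ℝ),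
        (∀ k, HasLimitFreq ω k (P k)) → (∀ k, p ≤ P k) →
        ∀ (Q : Fin m → ℚ), (∀ k, 0 < Q k) → (∑ k, Q k = 1) →
          ∀ δ : ℝ, 0 ≤ δ → δ ≤ δ₀ → (∀ k, |P k - (Q k : ℝ)| ≤ δ) →
            ∀ (ωQ : ℕ → Fin m), IsPeriodic ωQ → (∀ k, HasLimitFreq ωQ k (Q k : ℝ)) →
              ∀ (Λ ΛQ : Set (ℝ × ℝ)), IsLimitSet S ω Λ → IsLimitSet S ωQ ΛQ →
                ∀ L : ℝ, 0 ≤ L → dimH ΛQ = ENNReal.ofReal L →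
                  ENNReal.ofReal (L * (1 - K * δ)) ≤ dimH Λ ∧
                  dimH Λ ≤ ENNReal.ofReal (L * (1 + K * δ)) := by
  obtain ⟨κ, hκ, hS⟩ := exists_kappa S
  have y0 : Code S := fun k _ => Classical.arbitrary _
  have hκ1 : κ < 1 := (y0.adm_x hS fun _ => ⟨0, hm⟩).kappa_lt hκ
  have ht0 : 0 < tau κ :=
    div_pos_of_neg_of_neg (Real.log_neg hκ hκ1) (Real.log_neg (by linarith) (by linarith))
  -- `δ ≤ p / 2` keeps the frequencies `Q k` above `p / 2`
  have hq : 0 < p / 2 := half_pos hp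
  set K := tau κ / (p / 2) with hK
  have hK0 : 0 < K := by positivity
  refine ⟨2 * K, by positivity, min (p / 2) (1 / (2 * K)), by positivity, ?_⟩
  intro ω P hω hP Q _ _ δ hδ hδ0 hPQ ωQ _ hωQ Λ ΛQ hΛ hΛQ L hL hdim
  have hδp : δ ≤ p / 2 := hδ0.trans (min_le_left _ _)
  have hδK : K * δ ≤ 1 / 2 := by
    have := hδ0.trans (min_le_right _ _)
    rw [le_div_iff₀ (by positivity)] at this
    linarith
  have hKδ : 0 ≤ K * δ := by positivity
  have h1 := dimH_limitSet_le hκ hκ1 hS hq hδ hω hωQ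
    (fun k => by linarith [hP k, (abs_le.1 (hPQ k)).2]) hPQ hΛ hΛQ
  have h2 := dimH_limitSet_le hκ hκ1 hS hq hδ hωQ hω (fun k => by linarith [hP k])
    (fun k => by rw [abs_sub_comm]; exact hPQ k) hΛQ hΛ
  rw [hdim, ← hK] at h1 h2
  constructor
  · refine le_trans ?_ h1
    rw [← ENNReal.ofReal_mul hL]
    apply ENNReal.ofReal_le_ofReal
    gcongr
    linarith
  · have hpos : 0 < 1 - K * δ := by linarith
    rw [← ENNReal.le_div_iff_mul_le (Or.inl (by simpa using hpos)) (Or.inl ENNReal.ofReal_ne_top),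
      ← ENNReal.ofReal_div_of_pos hpos] at h2
    refine h2.trans (ENNReal.ofReal_le_ofReal ?_)
    -- `1 / (1 - x) ≤ 1 + 2 * x` for `0 ≤ x ≤ 1 / 2`
    rw [div_le_iff₀ hpos, mul_assoc]
    have : 1 ≤ (1 + 2 * K * δ) * (1 - K * δ) := by nlinarith
    nlinarith
end

section
/- Let 𝓕_1, …, 𝓕_m be Lalley–Gatzouras schemes with alphabets A_1,…,A_m, fix ω ∈ {1,…,m}^ℕ, and let A_ω = A_{ω_1} × A_{ω_2} × …. Define D : A_ω × A_ω → [0,∞) by D(x,x) = 0 and, for distinct x = (i,j) and y = (i',j'), D(x,y) = ∏_{k=1}^{n_1} a^{(ω_k)}_{i_k j_k} + ∏_{k=1}^{n_2} b^{(ω_k)}_{i_k}, where n_2 is the length of the longest common prefix of the sequences (i_k) and (i'_k), and n_1 is the length of the longest common prefix of the sequences ((i_k,j_k)) and ((i'_k,j'_k)) (so that D(x,y) is the sum of the width and the height of the smallest rectangle containing both points). Then D is a metric on A_ω, and the coding map π_ω : (A_ω, D) → ℝ² is Lipschitz. If moreover every scheme 𝓕_k satisfies the separation condition, then π_ω is bi-Lipschitz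 onto its image. -/
/-!
Write `D = W + H`, where `W` (width) and `H` (height) both have the form of a product along the longest
common prefix of two sequences. Since the factors lie in `[0, 1]` and depend only on that prefix,
`W` and `H` are nonnegative and symmetric and satisfy the triangle inequality (`prefixVal_triangle`);
`W` vanishes only on the diagonal.

Each coordinate of the coding map is a series `∑ P k * c k` with `P k = ∏_{l<k} a l`, where `0 ≤ c k`
and `a k + c k ≤ 1`. Its partial sums `U n` increase while `U n + P n` decreases, so the limit `L`
satisfies `U n ≤ L ≤ U n + P n` for all `n` (`series_lower`, `series_upper`). Two points with a common
prefix of length `n` thus differ by at most `P n` in that coordinate (`series_close`), which gives the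
Lipschitz bound with constant `1` for the sup distance. Conversely, if after a common prefix the next
two intervals are `δ` apart, the limits are `δ * P n` apart (`series_gap`). Under separation there is a
uniform `δ > 0`, because the schemes and alphabets are finite. If the first difference of the symbols
`(i, j)` is in `j` only, the horizontal gap bounds `W`; if it is in `i`, the vertical gap bounds `W`
as well, since `a ≤ b` makes widths at most heights.
-/

open Filter Metric Finset

open Classical in
/-- The symbolic metric `D` on `A_ω` : the distance between two distinct points is the sum
of the width and the height of the smallest rectangle containing them both, i.e.
`D x y = ∏_{k<n₁} a + ∏_{k<n₂} b` where `n₂` is the length of the longest common prefix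
of the sequences `(i k)` and `n₁` that of the sequences `((i k, j k))` (the height term
being `0`, the limit of the heights, in the degenerate case where the `i`-sequences agree
entirely). -/
noncomputable def Dmet {m : ℕ} {S : Fin m → LGScheme} {ω : ℕ → Fin m}
    (x y : SymSpace S ω) : ℝ :=
  if x = y then 0
  else
    SymSpace.width x (sInf {k | x k ≠ y k}) +
    (if ∀ k, (x k).1 = (y k).1 then 0
     else SymSpace.height x (sInf {k | (x k).1 ≠ (y k).1}))

/-! ### Values along the longest common prefix -/

open Classical in
/-- The value of `P` at the length of the longest common prefix of `u` and `v`, and `0` if `u = v`. -/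
noncomputable def prefixVal {β : ℕ → Type} (P : ℕ → ℝ) (u v : ∀ k, β k) : ℝ :=
  if u = v then 0 else P (sInf {k | u k ≠ v k})

theorem prefixVal_self {β : ℕ → Type} (P : ℕ → ℝ) (u : ∀ k, β k) : prefixVal P u u = 0 := by
  simp [prefixVal]

theorem prefixVal_eq {β : ℕ → Type} (P : ℕ → ℝ) {u v : ∀ k, β k} {n : ℕ}
    (h : ∀ k < n, u k = v k) (hn : u n ≠ v n) : prefixVal P u v = P n := by
  have hne : u ≠ v := fun e => hn (by rw [e])
  have : sInf {k | u k ≠ v k} = n := by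
    apply le_antisymm
    · exact Nat.sInf_le hn
    · by_contra! hlt
      exact Nat.sInf_mem (s := {k | u k ≠ v k}) ⟨n, hn⟩ (h _ hlt)
  rw [prefixVal, if_neg hne, this]

theorem exists_first_ne {β : ℕ → Type} {u v : ∀ k, β k} (h : u ≠ v) :
    ∃ n, (∀ k < n, u k = v k) ∧ u n ≠ v n := by
  classical
  have hex : ∃ n, u n ≠ v n := Function.ne_iff.mp h
  exact ⟨Nat.find hex, fun k hk => not_not.mp (Nat.find_min hex hk), Nat.find_spec hex⟩

theorem prefixVal_nonneg {β : ℕ → Type} {P : ℕ → ℝ} (hP : ∀ n, 0 ≤ P n) (u v : ∀ k, β k) :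
    0 ≤ prefixVal P u v := by
  unfold prefixVal
  split_ifs
  · exact le_rfl
  · exact hP _

theorem prefixVal_le {β : ℕ → Type} {P : ℕ → ℝ} (hP : ∀ n, 0 ≤ P n) (hanti : Antitone P)
    {u v : ∀ k, β k} {n : ℕ} (h : ∀ k < n, u k = v k) : prefixVal P u v ≤ P n := by
  by_cases huv : u = v
  · rw [huv, prefixVal_self]; exact hP n
  · obtain ⟨p, hp, hpn⟩ := exists_first_ne huv
    rw [prefixVal_eq P hp hpn]
    apply hanti
    by_contra! hlt
    exact hpn (h _ hlt)

/-- Symmetry, when the values are computed from the common prefix. -/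
theorem prefixVal_symm {β : ℕ → Type} {P Q : ℕ → ℝ} {u v : ∀ k, β k}
    (hPQ : ∀ n, (∀ k < n, u k = v k) → P n = Q n) : prefixVal P u v = prefixVal Q v u := by
  by_cases huv : u = v
  · subst huv; simp [prefixVal_self]
  · obtain ⟨p, hp, hpn⟩ := exists_first_ne huv
    rw [prefixVal_eq P hp hpn, prefixVal_eq Q (fun k hk => (hp k hk).symm) hpn.symm, hPQ p hp]

theorem prefixVal_triangle {β : ℕ → Type} {P Q : ℕ → ℝ} (hP : ∀ n, 0 ≤ P n) (hQ : ∀ n, 0 ≤ Q n)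
    (hanti : Antitone P) {u v w : ∀ k, β k} (hPQ : ∀ n, (∀ k < n, u k = v k) → P n = Q n) :
    prefixVal P u w ≤ prefixVal P u v + prefixVal Q v w := by
  have h1 := prefixVal_nonneg hP u v
  have h2 := prefixVal_nonneg hQ v w
  by_cases huv : u = v
  · subst huv
    have : P = Q := funext fun n => hPQ n fun _ _ => rfl
    subst this
    linarith
  by_cases hvw : v = w
  · subst hvw; linarith
  obtain ⟨p, hp, hpn⟩ := exists_first_ne huv
  obtain ⟨q, hq, hqn⟩ := exists_first_ne hvw
  -- `u` and `w` agree up to the earlier of the two first disagreements.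
  rcases le_total p q with hpq | hqp
  · have := prefixVal_le hP hanti (u := u) (v := w) (n := p)
      fun k hk => (hp k hk).trans (hq k (hk.trans_le hpq))
    rw [← prefixVal_eq P hp hpn] at this
    linarith
  · have := prefixVal_le hP hanti (u := u) (v := w) (n := q)
      fun k hk => (hp k (hk.trans_le hqp)).trans (hq k hk)
    rw [hPQ q fun k hk => hp k (hk.trans_le hqp), ← prefixVal_eq Q hq hqn] at this
    linarith

/-! ### Series of nested intervals -/

/-- The left endpoint of the `n`-th of the nested intervals `[U n, U n + ∏_{k<n} a k]`. -/
noncomputable def leftEnd (a c : ℕ → ℝ) (n : ℕ) : ℝ :=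
  ∑ k ∈ Finset.range n, (∏ l ∈ Finset.range k, a l) * c k

theorem leftEnd_succ (a c : ℕ → ℝ) (n : ℕ) :
    leftEnd a c (n + 1) = leftEnd a c n + (∏ l ∈ Finset.range n, a l) * c n :=
  Finset.sum_range_succ _ _

theorem series_lower {a c : ℕ → ℝ} {L : ℝ} (ha : ∀ k, 0 < a k) (hc : ∀ k, 0 ≤ c k)
    (hL : Tendsto (leftEnd a c) atTop (nhds L)) (n : ℕ) : leftEnd a c n ≤ L := by
  refine Monotone.ge_of_tendsto (monotone_nat_of_le_succ fun k => ?_) hL n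
  rw [leftEnd_succ]
  have := mul_nonneg (Finset.prod_nonneg fun l (_ : l ∈ Finset.range k) => (ha l).le) (hc k)
  linarith

theorem series_upper {a c : ℕ → ℝ} {L : ℝ} (ha : ∀ k, 0 < a k) (hac : ∀ k, a k + c k ≤ 1)
    (hL : Tendsto (leftEnd a c) atTop (nhds L)) (n : ℕ) :
    L ≤ leftEnd a c n + ∏ l ∈ Finset.range n, a l := by
  have hpos : ∀ k, 0 ≤ ∏ l ∈ Finset.range k, a l := fun k => Finset.prod_nonneg fun l _ => (ha l).le
  have hanti : Antitone fun n => leftEnd a c n + ∏ l ∈ Finset.range n, a l := by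
    refine antitone_nat_of_succ_le fun k => ?_
    simp only [leftEnd_succ, Finset.prod_range_succ]
    have := mul_le_mul_of_nonneg_left (hac k) (hpos k)
    linarith
  refine le_of_tendsto hL ?_
  filter_upwards [eventually_ge_atTop n] with k hk
  have := hanti hk
  have := hpos k
  simp only at *
  linarith

theorem prefix_congr {a a' c c' : ℕ → ℝ} {n : ℕ} (h : ∀ k < n, a k = a' k ∧ c k = c' k) :
    ∏ l ∈ Finset.range n, a l = ∏ l ∈ Finset.range n, a' l ∧ leftEnd a c n = leftEnd a' c' n := by
  induction n with
  | zero => simp [leftEnd]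
  | succ n ih =>
    obtain ⟨h1, h2⟩ := ih fun k hk => h k (by omega)
    obtain ⟨h3, h4⟩ := h n (by omega)
    rw [leftEnd_succ, leftEnd_succ, Finset.prod_range_succ, Finset.prod_range_succ, h1, h2, h3, h4]
    exact ⟨rfl, rfl⟩

theorem series_close {a a' c c' : ℕ → ℝ} {L L' : ℝ} (ha : ∀ k, 0 < a k) (hc : ∀ k, 0 ≤ c k)
    (hac : ∀ k, a k + c k ≤ 1) (ha' : ∀ k, 0 < a' k) (hc' : ∀ k, 0 ≤ c' k)
    (hac' : ∀ k, a' k + c' k ≤ 1) (hL : Tendsto (leftEnd a c) atTop (nhds L))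
    (hL' : Tendsto (leftEnd a' c') atTop (nhds L')) {n : ℕ}
    (h : ∀ k < n, a k = a' k ∧ c k = c' k) : |L - L'| ≤ ∏ l ∈ Finset.range n, a l := by
  obtain ⟨h1, h2⟩ := prefix_congr h
  have := series_lower ha hc hL n
  have := series_upper ha hac hL n
  have := series_lower ha' hc' hL' n
  have := series_upper ha' hac' hL' n
  rw [abs_le]
  constructor <;> linarith

/-- The limits agree because they are limits of the same sequence; no decay of the products is needed. -/
theorem series_eq {a a' c c' : ℕ → ℝ} {L L' : ℝ} (hL : Tendsto (leftEnd a c) atTop (nhds L))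
    (hL' : Tendsto (leftEnd a' c') atTop (nhds L')) (h : ∀ k, a k = a' k ∧ c k = c' k) :
    L = L' := by
  have : leftEnd a c = leftEnd a' c' := funext fun n => (prefix_congr fun k _ => h k).2
  rw [this] at hL
  exact tendsto_nhds_unique hL hL'

/-- If the two sequences of nested intervals share a prefix and the next intervals are separated by
the proportion `δ` of the common one, then so are the limits. -/
theorem series_gap {a a' c c' : ℕ → ℝ} {L L' δ : ℝ} (ha : ∀ k, 0 < a k)
    (hac : ∀ k, a k + c k ≤ 1) (ha' : ∀ k, 0 < a' k) (hc' : ∀ k, 0 ≤ c' k)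
    (hL : Tendsto (leftEnd a c) atTop (nhds L))
    (hL' : Tendsto (leftEnd a' c') atTop (nhds L')) {n : ℕ}
    (h : ∀ k < n, a k = a' k ∧ c k = c' k) (hn : a n + c n + δ ≤ c' n) :
    δ * ∏ l ∈ Finset.range n, a l ≤ L' - L := by
  obtain ⟨h1, h2⟩ := prefix_congr h
  have hu := series_upper ha hac hL (n + 1)
  have hl := series_lower ha' hc' hL' (n + 1)
  rw [leftEnd_succ, Finset.prod_range_succ] at hu
  rw [leftEnd_succ, ← h1, ← h2] at hl
  have := mul_le_mul_of_nonneg_left hn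
    (Finset.prod_nonneg fun l (_ : l ∈ Finset.range n) => (ha l).le)
  linarith

/-! ### Ordered families of intervals -/

theorem stack_mono {n : ℕ} {u v : Fin n → ℝ} (hv : ∀ i, 0 < v i)
    (h : ∀ (i : Fin n) (hi : (i : ℕ) + 1 < n), v i + u i ≤ u ⟨(i : ℕ) + 1, hi⟩) : Monotone u := by
  intro i j hij
  obtain ⟨j, hj⟩ := j
  have hij' : (i : ℕ) ≤ j := hij
  clear hij
  induction j, hij' using Nat.le_induction with
  | base => exact le_rfl
  | succ j _ ih =>
    have h1 := ih (by omega)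
    have h2 := h ⟨j, by omega⟩ hj
    have h3 := hv ⟨j, by omega⟩
    simp only at h2
    linarith

theorem stack_bounds {n : ℕ} {u v : Fin n → ℝ} (hn : 0 < n) (hv : ∀ i, 0 < v i)
    (h : ∀ (i : Fin n) (hi : (i : ℕ) + 1 < n), v i + u i ≤ u ⟨(i : ℕ) + 1, hi⟩)
    (h0 : 0 ≤ u ⟨0, hn⟩)
    (h1 : u ⟨n - 1, Nat.sub_lt hn Nat.one_pos⟩ ≤ 1 - v ⟨n - 1, Nat.sub_lt hn Nat.one_pos⟩)
    (i : Fin n) : 0 ≤ u i ∧ v i + u i ≤ 1 := by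
  have hm := stack_mono hv h
  refine ⟨h0.trans (hm (Fin.mk_le_of_le_val (Nat.zero_le _))), ?_⟩
  by_cases hi : (i : ℕ) + 1 < n
  · have h2 : u ⟨(i : ℕ) + 1, hi⟩ ≤ u ⟨n - 1, Nat.sub_lt hn Nat.one_pos⟩ :=
      hm (Fin.mk_le_mk.mpr (by omega))
    have h3 := h i hi
    have h4 := hv ⟨n - 1, Nat.sub_lt hn Nat.one_pos⟩
    linarith
  · have : i = ⟨n - 1, Nat.sub_lt hn Nat.one_pos⟩ := Fin.ext (by have := i.2; simp only; omega)
    rw [← this] at h1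
    linarith

theorem stack_lt {n : ℕ} {u v : Fin n → ℝ} (hv : ∀ i, 0 < v i)
    (h : ∀ (i : Fin n) (hi : (i : ℕ) + 1 < n), v i + u i < u ⟨(i : ℕ) + 1, hi⟩)
    {i j : Fin n} (hij : i < j) : v i + u i < u j := by
  have hij' : (i : ℕ) + 1 ≤ j := hij
  have hi : (i : ℕ) + 1 < n := hij'.trans_lt j.2
  exact (h i hi).trans_le (stack_mono hv (fun i hi => (h i hi).le) (Fin.mk_le_of_le_val hij'))

theorem exists_pos_le {ι : Type} [Finite ι] (g : ι → ℝ) (hg : ∀ i, 0 < g i) :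
    ∃ δ : ℝ, 0 < δ ∧ ∀ i, δ ≤ g i := by
  cases isEmpty_or_nonempty ι
  · exact ⟨1, one_pos, fun i => isEmptyElim i⟩
  · obtain ⟨i, hi⟩ := Finite.exists_min g
    exact ⟨g i, hg i, hi⟩

namespace LGScheme

theorem hb_pos (S : LGScheme) (i : Fin S.m₁) : 0 < S.b i :=
  (S.ha_pos i ⟨0, S.hm₂ i⟩).trans_le (S.hab i _)

theorem c_bounds (S : LGScheme) (i : Fin S.m₁) (j : Fin (S.m₂ i)) :
    0 ≤ S.c i j ∧ S.a i j + S.c i j ≤ 1 :=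
  stack_bounds (S.hm₂ i) (S.ha_pos i) (S.hc_step i) (S.hc_first i) (S.hc_last i) j

theorem d_bounds (S : LGScheme) (i : Fin S.m₁) : 0 ≤ S.d i ∧ S.b i + S.d i ≤ 1 :=
  stack_bounds S.hm₁ S.hb_pos S.hd_step S.hd_first S.hd_last i

end LGScheme

/-- Under separation the columns within a row are uniformly separated, since there are finitely many
pairs of symbols in all. -/
theorem exists_gap_c {m : ℕ} {S : Fin m → LGScheme} (hS : ∀ k, (S k).Separation) :
    ∃ δ : ℝ, 0 < δ ∧ ∀ k (s t : (S k).Sym), s.1 = t.1 → s ≠ t →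
      (S k).a s.1 s.2 + (S k).c s.1 s.2 + δ ≤ (S k).c t.1 t.2 ∨
      (S k).a t.1 t.2 + (S k).c t.1 t.2 + δ ≤ (S k).c s.1 s.2 := by
  obtain ⟨δ, hδ, h⟩ := exists_pos_le
    (ι := (k : Fin m) × (i : Fin (S k).m₁) × (Fin ((S k).m₂ i) × Fin ((S k).m₂ i)))
    (fun p => if p.2.2.1 < p.2.2.2 then
      (S p.1).c p.2.1 p.2.2.2 - ((S p.1).a p.2.1 p.2.2.1 + (S p.1).c p.2.1 p.2.2.1) else 1)
    (by
      rintro ⟨k, i, j, j'⟩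
      dsimp only
      split_ifs with hj
      · exact sub_pos.mpr (stack_lt ((S k).ha_pos i) ((hS k).1 i) hj)
      · exact one_pos)
  refine ⟨δ, hδ, ?_⟩
  rintro k ⟨i, j⟩ ⟨i', j'⟩ hi hne
  dsimp only at hi
  subst hi
  have hj : j ≠ j' := fun e => hne (by rw [e])
  dsimp only
  rcases lt_or_gt_of_ne hj with hlt | hlt
  · have := h ⟨k, i, j, j'⟩
    simp only [if_pos hlt] at this
    left; linarith
  · have := h ⟨k, i, j', j⟩
    simp only [if_pos hlt] at this
    right; linarith

/-- Under separation the rows of each scheme are uniformly separated. -/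
theorem exists_gap_d {m : ℕ} {S : Fin m → LGScheme} (hS : ∀ k, (S k).Separation) :
    ∃ δ : ℝ, 0 < δ ∧ ∀ k (i i' : Fin (S k).m₁), i ≠ i' →
      (S k).b i + (S k).d i + δ ≤ (S k).d i' ∨ (S k).b i' + (S k).d i' + δ ≤ (S k).d i := by
  obtain ⟨δ, hδ, h⟩ := exists_pos_le
    (ι := (k : Fin m) × (Fin (S k).m₁ × Fin (S k).m₁))
    (fun p => if p.2.1 < p.2.2 then
      (S p.1).d p.2.2 - ((S p.1).b p.2.1 + (S p.1).d p.2.1) else 1)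
    (by
      rintro ⟨k, i, i'⟩
      dsimp only
      split_ifs with hj
      · exact sub_pos.mpr (stack_lt (S k).hb_pos (hS k).2 hj)
      · exact one_pos)
  refine ⟨δ, hδ, fun k i i' hi => ?_⟩
  rcases lt_or_gt_of_ne hi with hlt | hlt
  · have := h ⟨k, i, i'⟩
    simp only [if_pos hlt] at this
    left; linarith
  · have := h ⟨k, i', i⟩
    simp only [if_pos hlt] at this
    right; linarith

/-! ### Widths, heights and the coding map -/

namespace SymSpace

variable {m : ℕ} {S : Fin m → LGScheme} {ω : ℕ → Fin m}

/-- The row sequence `(i k)` of a point `((i k, j k))` of the symbolic space. -/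
def rows (x : SymSpace S ω) (k : ℕ) : Fin (S (ω k)).m₁ := (x k).1

theorem width_pos (x : SymSpace S ω) (n : ℕ) : 0 < width x n :=
  Finset.prod_pos fun _ _ => LGScheme.ha_pos _ _ _

theorem height_pos (x : SymSpace S ω) (n : ℕ) : 0 < height x n :=
  Finset.prod_pos fun _ _ => LGScheme.hb_pos _ _

theorem width_le_height (x : SymSpace S ω) (n : ℕ) : width x n ≤ height x n :=
  Finset.prod_le_prod (fun _ _ => (LGScheme.ha_pos _ _ _).le) fun _ _ => LGScheme.hab _ _ _

theorem width_antitone (x : SymSpace S ω) : Antitone (width x) := by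
  refine antitone_nat_of_succ_le fun n => ?_
  rw [width, Finset.prod_range_succ]
  exact mul_le_of_le_one_right (width_pos x n).le
    ((LGScheme.hab _ _ _).trans (LGScheme.hb_lt_one _ _).le)

theorem height_antitone (x : SymSpace S ω) : Antitone (height x) := by
  refine antitone_nat_of_succ_le fun n => ?_
  rw [height, Finset.prod_range_succ]
  exact mul_le_of_le_one_right (height_pos x n).le (LGScheme.hb_lt_one _ _).le

theorem width_congr {x y : SymSpace S ω} (n : ℕ) (h : ∀ k < n, x k = y k) :
    width x n = width y n :=
  Finset.prod_congr rfl fun k hk => by rw [h k (Finset.mem_range.mp hk)]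

theorem height_congr {x y : SymSpace S ω} (n : ℕ) (h : ∀ k < n, rows x k = rows y k) :
    height x n = height y n :=
  Finset.prod_congr rfl fun k hk => congrArg (S (ω k)).b (h k (Finset.mem_range.mp hk))

theorem prefixVal_width_self (x : SymSpace S ω) : prefixVal (width x) x x = 0 :=
  prefixVal_self _ _

theorem Dmet_eq (x y : SymSpace S ω) :
    Dmet x y = prefixVal (width x) x y + prefixVal (height x) (rows x) (rows y) := by
  by_cases h : x = y
  · subst h
    rw [prefixVal_width_self, prefixVal_self, Dmet, if_pos rfl, add_zero]
  · have h1 : prefixVal (width x) x y = width x (sInf {k | x k ≠ y k}) := if_neg h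
    rw [Dmet, if_neg h, h1]
    congr 1
    classical exact ite_congr (propext funext_iff.symm) (fun _ => rfl) fun _ => rfl

/-- The composition of the first `n` maps is affine; its translation part is the pair of left
endpoints of the nested intervals in the two coordinates. -/
theorem foldr_eq (x : SymSpace S ω) (n : ℕ) (p : ℝ × ℝ) :
    (List.range n).foldr (fun k p => (S (ω k)).toMap (x k) p) p =
      (leftEnd (fun k => (S (ω k)).a (x k).1 (x k).2) (fun k => (S (ω k)).c (x k).1 (x k).2) n
          + width x n * p.1,
        leftEnd (fun k => (S (ω k)).b (x k).1) (fun k => (S (ω k)).d (x k).1) n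
          + height x n * p.2) := by
  induction n generalizing p with
  | zero => simp [leftEnd, width, height]
  | succ n ih =>
    rw [List.range_succ, List.foldr_append, ih, leftEnd_succ, leftEnd_succ]
    simp only [List.foldr_cons, List.foldr_nil, LGScheme.toMap, width, height,
      Finset.prod_range_succ]
    ext <;> simp only <;> ring

end SymSpace

open SymSpace

/-- Let `S 1, …, S m` be Lalley–Gatzouras schemes, fix `ω`, and let
`D = Dmet` be the symbolic distance on `A_ω` (sum of width and height of the smallest
rectangle containing both points).  Then `D` is a metric on `A_ω`, and the coding map
`π_ω : (A_ω, D) → ℝ²` is Lipschitz.  If moreover every scheme satisfies the separation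
condition, then `π_ω` is bi-Lipschitz onto its image. -/
theorem statement16 {m : ℕ} (hm : 0 < m) (S : Fin m → LGScheme) (ω : ℕ → Fin m)
    (π : SymSpace S ω → ℝ × ℝ)
    (hπ : ∀ x : SymSpace S ω,
      Tendsto
        (fun n => (List.range n).foldr (fun k p => (S (ω k)).toMap (x k) p) ((0 : ℝ), (0 : ℝ)))
        atTop (nhds (π x))) :
    ((∀ x y : SymSpace S ω, 0 ≤ Dmet x y) ∧
     (∀ x y : SymSpace S ω, Dmet x y = 0 ↔ x = y) ∧
     (∀ x y : SymSpace S ω, Dmet x y = Dmet y x) ∧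
     (∀ x y z : SymSpace S ω, Dmet x z ≤ Dmet x y + Dmet y z)) ∧
    (∃ c : ℝ, 0 < c ∧ ∀ x y : SymSpace S ω, dist (π x) (π y) ≤ c * Dmet x y) ∧
    ((∀ k, (S k).Separation) →
      ∃ c : ℝ, 0 < c ∧ ∀ x y : SymSpace S ω,
        c⁻¹ * Dmet x y ≤ dist (π x) (π y) ∧ dist (π x) (π y) ≤ c * Dmet x y) := by
  have hπ1 : ∀ x : SymSpace S ω, Tendsto (leftEnd (fun k => (S (ω k)).a (x k).1 (x k).2)
      (fun k => (S (ω k)).c (x k).1 (x k).2)) atTop (nhds (π x).1) := fun x => by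
    simpa [foldr_eq, Function.comp_def] using (continuous_fst.tendsto _).comp (hπ x)
  have hπ2 : ∀ x : SymSpace S ω, Tendsto (leftEnd (fun k => (S (ω k)).b (x k).1)
      (fun k => (S (ω k)).d (x k).1)) atTop (nhds (π x).2) := fun x => by
    simpa [foldr_eq, Function.comp_def] using (continuous_snd.tendsto _).comp (hπ x)
  have hW0 : ∀ x y : SymSpace S ω, 0 ≤ prefixVal (width x) x y := fun x y =>
    prefixVal_nonneg (fun n => (width_pos x n).le) _ _
  have hH0 : ∀ x y : SymSpace S ω, 0 ≤ prefixVal (height x) (rows x) (rows y) := fun x y =>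
    prefixVal_nonneg (fun n => (height_pos x n).le) _ _
  have hD0 : ∀ x y : SymSpace S ω, 0 ≤ Dmet x y := fun x y => by
    rw [Dmet_eq]; exact add_nonneg (hW0 x y) (hH0 x y)
  have hlip : ∀ x y : SymSpace S ω, dist (π x) (π y) ≤ Dmet x y := by
    intro x y
    have h1 : |(π x).1 - (π y).1| ≤ prefixVal (width x) x y := by
      by_cases h : x = y
      · subst h; rw [prefixVal_width_self]; simp
      · obtain ⟨n, hn, hne⟩ := exists_first_ne h
        rw [prefixVal_eq _ hn hne]
        exact series_close (fun _ => LGScheme.ha_pos _ _ _) (fun _ => (LGScheme.c_bounds _ _ _).1)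
          (fun _ => (LGScheme.c_bounds _ _ _).2) (fun _ => LGScheme.ha_pos _ _ _)
          (fun _ => (LGScheme.c_bounds _ _ _).1) (fun _ => (LGScheme.c_bounds _ _ _).2)
          (hπ1 x) (hπ1 y) (fun k hk => by rw [hn k hk]; exact ⟨rfl, rfl⟩)
    have h2 : |(π x).2 - (π y).2| ≤ prefixVal (height x) (rows x) (rows y) := by
      have hrow : ∀ k, rows x k = rows y k →
          (S (ω k)).b (x k).1 = (S (ω k)).b (y k).1 ∧ (S (ω k)).d (x k).1 = (S (ω k)).d (y k).1 :=
        fun k hk => ⟨congrArg (S (ω k)).b hk, congrArg (S (ω k)).d hk⟩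
      by_cases h : rows x = rows y
      · have := series_eq (hπ2 x) (hπ2 y) fun k => hrow k (congrFun h k)
        rw [this, h, prefixVal_self]; simp
      · obtain ⟨n, hn, hne⟩ := exists_first_ne h
        rw [prefixVal_eq _ hn hne]
        exact series_close (fun _ => LGScheme.hb_pos _ _) (fun _ => (LGScheme.d_bounds _ _).1)
          (fun _ => (LGScheme.d_bounds _ _).2) (fun _ => LGScheme.hb_pos _ _)
          (fun _ => (LGScheme.d_bounds _ _).1) (fun _ => (LGScheme.d_bounds _ _).2)
          (hπ2 x) (hπ2 y) (fun k hk => hrow k (hn k hk))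
    rw [Dmet_eq, Prod.dist_eq, Real.dist_eq, Real.dist_eq]
    exact max_le (by linarith [hH0 x y]) (by linarith [hW0 x y])
  refine ⟨⟨hD0, ?_, ?_, ?_⟩, ⟨1, one_pos, fun x y => by rw [one_mul]; exact hlip x y⟩, ?_⟩
  · refine fun x y => ⟨fun h => ?_, fun h => by subst h; simp [Dmet]⟩
    by_contra hne
    obtain ⟨n, hn, hnn⟩ := exists_first_ne hne
    have h1 := prefixVal_eq (width x) hn hnn
    rw [Dmet_eq, h1] at h
    linarith [width_pos x n, hH0 x y]
  · intro x y
    rw [Dmet_eq, Dmet_eq, prefixVal_symm width_congr, prefixVal_symm height_congr]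
  · intro x y z
    have h1 := prefixVal_triangle (fun n => (width_pos x n).le) (fun n => (width_pos y n).le)
      (width_antitone x) (u := x) (v := y) (w := z) width_congr
    have h2 := prefixVal_triangle (fun n => (height_pos x n).le) (fun n => (height_pos y n).le)
      (height_antitone x) (u := rows x) (v := rows y) (w := rows z) height_congr
    rw [Dmet_eq, Dmet_eq, Dmet_eq]
    linarith
  · intro hS
    obtain ⟨δ₁, hδ₁, hgap₁⟩ := exists_gap_c hS
    obtain ⟨δ₂, hδ₂, hgap₂⟩ := exists_gap_d hS
    obtain ⟨δ, hδ, hδle₁, hδle₂⟩ : ∃ δ : ℝ, 0 < δ ∧ δ ≤ δ₁ ∧ δ ≤ δ₂ :=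
      ⟨min δ₁ δ₂, lt_min hδ₁ hδ₂, min_le_left _ _, min_le_right _ _⟩
    have hfst : ∀ x y : SymSpace S ω, |(π x).1 - (π y).1| ≤ dist (π x) (π y) := fun x y => by
      rw [Prod.dist_eq, Real.dist_eq]; exact le_max_left _ _
    have hsnd : ∀ x y : SymSpace S ω, |(π x).2 - (π y).2| ≤ dist (π x) (π y) := fun x y => by
      rw [Prod.dist_eq, Real.dist_eq, Real.dist_eq]; exact le_max_right _ _
    -- The case where, at the first difference in the rows, the row of `x` lies below that of `y`.
    have hvert' : ∀ (x y : SymSpace S ω) (n : ℕ), (∀ k < n, rows x k = rows y k) →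
        (S (ω n)).b (x n).1 + (S (ω n)).d (x n).1 + δ₂ ≤ (S (ω n)).d (y n).1 →
        δ * height x n ≤ dist (π x) (π y) := by
      intro x y n hn hg
      have h : δ * height x n ≤ (π y).2 - (π x).2 :=
        series_gap (δ := δ) (fun _ => LGScheme.hb_pos _ _)
          (fun _ => (LGScheme.d_bounds _ _).2) (fun _ => LGScheme.hb_pos _ _)
          (fun _ => (LGScheme.d_bounds _ _).1) (hπ2 x) (hπ2 y)
          (fun k hk => ⟨congrArg (S (ω k)).b (hn k hk), congrArg (S (ω k)).d (hn k hk)⟩)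
          (by linarith)
      linarith [hsnd x y, neg_abs_le ((π x).2 - (π y).2)]
    have hvert : ∀ (x y : SymSpace S ω) (n : ℕ), (∀ k < n, rows x k = rows y k) →
        rows x n ≠ rows y n → δ * height x n ≤ dist (π x) (π y) := by
      intro x y n hn hne
      rcases hgap₂ (ω n) _ _ hne with hg | hg
      · exact hvert' x y n hn hg
      · rw [height_congr n hn, dist_comm]
        exact hvert' y x n (fun k hk => (hn k hk).symm) hg
    have hhor' : ∀ (x y : SymSpace S ω) (n : ℕ), (∀ k < n, x k = y k) →
        (S (ω n)).a (x n).1 (x n).2 + (S (ω n)).c (x n).1 (x n).2 + δ₁ ≤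
          (S (ω n)).c (y n).1 (y n).2 →
        δ * width x n ≤ dist (π x) (π y) := by
      intro x y n hn hg
      have h : δ * width x n ≤ (π y).1 - (π x).1 :=
        series_gap (δ := δ) (fun _ => LGScheme.ha_pos _ _ _)
          (fun _ => (LGScheme.c_bounds _ _ _).2) (fun _ => LGScheme.ha_pos _ _ _)
          (fun _ => (LGScheme.c_bounds _ _ _).1) (hπ1 x) (hπ1 y)
          (fun k hk => by rw [hn k hk]; exact ⟨rfl, rfl⟩) (by linarith)
      linarith [hfst x y, neg_abs_le ((π x).1 - (π y).1)]
    have hhor : ∀ (x y : SymSpace S ω) (n : ℕ), (∀ k < n, x k = y k) →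
        x n ≠ y n → δ * width x n ≤ dist (π x) (π y) := by
      intro x y n hn hne
      by_cases hr : (x n).1 = (y n).1
      · rcases hgap₁ (ω n) _ _ hr hne with hg | hg
        · exact hhor' x y n hn hg
        · rw [width_congr n hn, dist_comm]
          exact hhor' y x n (fun k hk => (hn k hk).symm) hg
      -- The rows differ here for the first time, so the vertical gap applies.
      · refine le_trans (mul_le_mul_of_nonneg_left (width_le_height x n) hδ.le) ?_
        exact hvert x y n (fun k hk => congrArg Sigma.fst (hn k hk)) hr
    have hlow : ∀ x y : SymSpace S ω, δ * Dmet x y ≤ 2 * dist (π x) (π y) := by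
      intro x y
      have h1 : δ * prefixVal (width x) x y ≤ dist (π x) (π y) := by
        by_cases h : x = y
        · subst h; rw [prefixVal_width_self]; simp
        · obtain ⟨n, hn, hne⟩ := exists_first_ne h
          rw [prefixVal_eq _ hn hne]
          exact hhor x y n hn hne
      have h2 : δ * prefixVal (height x) (rows x) (rows y) ≤ dist (π x) (π y) := by
        by_cases h : rows x = rows y
        · rw [h, prefixVal_self, mul_zero]; exact dist_nonneg
        · obtain ⟨n, hn, hne⟩ := exists_first_ne h
          rw [prefixVal_eq _ hn hne]
          exact hvert x y n hn hne
      rw [Dmet_eq]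
      linarith
    have hc : 0 < 1 + 2 / δ := by positivity
    refine ⟨1 + 2 / δ, hc, fun x y => ⟨?_, ?_⟩⟩
    · rw [inv_mul_le_iff₀ hc]
      have h1 : Dmet x y ≤ 2 / δ * dist (π x) (π y) := by
        rw [div_mul_eq_mul_div, le_div_iff₀ hδ]
        linarith [hlow x y]
      linarith [dist_nonneg (x := π x) (y := π y)]
    · have := mul_nonneg (div_pos two_pos hδ).le (hD0 x y)
      linarith [hlip x y]
end
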